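/- arXiv:2503.03902 — 8 statements merged into one kernel-verified Lean document; each statement's English description precedes it below -/
import Mathlib

section
/- Let H be a real Hilbert space, A : H → Set H a monotone set-valued operator, D : H → H monotone, and B : H → H monotone. Let z ∈ H with B z = 0, let p ∈ H and a_z ∈ A z satisfy a_z + D z + p = 0, let ε > 0, β > 0, and let x̄ ∈ H satisfy 0 ∈ A x̄ + D x̄ + ε x̄ + β B x̄ (i.e. there is a ∈ A x̄ with a + D x̄ + ε x̄ + β B x̄ = 0). Then ⟪x̄ − z, p⟫ ≥ ε ⟪x̄, x̄ − z⟫ ≥ ε ‖x̄‖ (‖x̄‖ − ‖z‖). -/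
open Filter Topology MeasureTheory
open scoped RealInnerProductSpace

/-!
The operator `T = A + D + β B` is monotone, and the two equations say `-p ∈ T z` and `-ε x̄ ∈ T x̄`.
Monotonicity of `T` between `x̄` and `z` is then `0 ≤ ⟪p - ε x̄, x̄ - z⟫`, and Cauchy–Schwarz bounds
`⟪x̄, x̄ - z⟫` from below.
-/

section MonotoneOperator

open scoped Pointwise

variable {H : Type*} [NormedAddCommGroup H] [InnerProductSpace ℝ H]

/-- Monotonicity of a set-valued operator at a point `z`: the monotonicity inequality for every pair
of points of the graph of which one lies over `z`. A single-valued map `f` is encoded as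
`fun x ↦ {f x}`. -/
def IsMonotoneOperatorAt (T : H → Set H) (z : H) : Prop :=
  ∀ ⦃x u v : H⦄, u ∈ T x → v ∈ T z → 0 ≤ ⟪u - v, x - z⟫

theorem isMonotoneOperatorAt_singleton {f : H → H} {z : H} :
    IsMonotoneOperatorAt (fun x ↦ {f x}) z ↔ ∀ x, 0 ≤ ⟪f x - f z, x - z⟫ := by
  simp [IsMonotoneOperatorAt]

namespace IsMonotoneOperatorAt

variable {S T : H → Set H} {z : H}

theorem add (hS : IsMonotoneOperatorAt S z) (hT : IsMonotoneOperatorAt T z) :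
    IsMonotoneOperatorAt (S + T) z := by
  rintro x _ _ ⟨s, hs, t, ht, rfl⟩ ⟨s', hs', t', ht', rfl⟩
  rw [add_sub_add_comm, inner_add_left]
  exact add_nonneg (hS hs hs') (hT ht ht')

theorem smul {c : ℝ} (hT : IsMonotoneOperatorAt T z) (hc : 0 ≤ c) :
    IsMonotoneOperatorAt (c • T) z := by
  rintro x _ _ ⟨t, ht, rfl⟩ ⟨t', ht', rfl⟩
  rw [← smul_sub, real_inner_smul_left]
  exact mul_nonneg hc (hT ht ht')

theorem mul_inner_sub_le_inner_sub {ε : ℝ} {x p : H} (hT : IsMonotoneOperatorAt T z)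
    (hz : -p ∈ T z) (hx : -(ε • x) ∈ T x) :
    ε * ⟪x, x - z⟫ ≤ ⟪x - z, p⟫ := by
  have h_nonneg : 0 ≤ ⟪p - ε • x, x - z⟫ := by
    simpa only [neg_sub_neg] using hT hx hz
  rw [inner_sub_left, real_inner_smul_left, sub_nonneg] at h_nonneg
  rwa [real_inner_comm p]

end IsMonotoneOperatorAt

theorem norm_mul_norm_sub_norm_le_inner_sub (x y : H) : ‖x‖ * (‖x‖ - ‖y‖) ≤ ⟪x, x - y⟫ := by
  rw [inner_sub_right, real_inner_self_eq_norm_mul_norm, mul_sub]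
  exact sub_le_sub_left (real_inner_le_norm x y) _

theorem regularized_solution_inequality_general {A D B : H → Set H} {z p az dz x a d b : H}
    {ε β : ℝ} (hA : IsMonotoneOperatorAt A z) (hD : IsMonotoneOperatorAt D z)
    (hB : IsMonotoneOperatorAt B z) (haz : az ∈ A z) (hdz : dz ∈ D z) (hBz : 0 ∈ B z)
    (hz : az + dz + p = 0) (hε : 0 ≤ ε) (hβ : 0 ≤ β) (ha : a ∈ A x) (hd : d ∈ D x) (hb : b ∈ B x)
    (hx : a + d + ε • x + β • b = 0) :
    ε * ⟪x, x - z⟫ ≤ ⟪x - z, p⟫ ∧ ε * (‖x‖ * (‖x‖ - ‖z‖)) ≤ ε * ⟪x, x - z⟫ := by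
  have hT : IsMonotoneOperatorAt (A + D + β • B) z := (hA.add hD).add (hB.smul hβ)
  have hpz : -p ∈ (A + D + β • B) z := by
    have h_eq : -p = az + dz + β • 0 := by rw [smul_zero, add_zero, eq_neg_of_add_eq_zero_left hz]
    rw [h_eq]
    exact Set.add_mem_add (Set.add_mem_add haz hdz) (Set.smul_mem_smul_set hBz)
  have hεx : -(ε • x) ∈ (A + D + β • B) x := by
    have h_eq : -(ε • x) = a + d + β • b := by
      rw [add_right_comm] at hx
      exact (eq_neg_of_add_eq_zero_left hx).symm
    rw [h_eq]
    exact Set.add_mem_add (Set.add_mem_add ha hd) (Set.smul_mem_smul_set hb)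
  exact ⟨hT.mul_inner_sub_le_inner_sub hpz hεx,
    mul_le_mul_of_nonneg_left (norm_mul_norm_sub_norm_le_inner_sub x z) hε⟩

end MonotoneOperator

/-- key inequality along the regularized solutions. -/
theorem regularized_solution_inequality
    {H : Type*} [NormedAddCommGroup H] [InnerProductSpace ℝ H]
    (A : H → Set H) (D B : H → H)
    (hAmono : ∀ ⦃x y u v : H⦄, u ∈ A x → v ∈ A y → (0:ℝ) ≤ ⟪u - v, x - y⟫)
    (hDmono : ∀ x y : H, (0:ℝ) ≤ ⟪D x - D y, x - y⟫)
    (hBmono : ∀ x y : H, (0:ℝ) ≤ ⟪B x - B y, x - y⟫)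
    (z p az : H) (hBz : B z = 0) (haz : az ∈ A z) (hzsol : az + D z + p = 0)
    (ε β : ℝ) (hε : 0 < ε) (hβ : 0 < β)
    (xbar a : H) (ha : a ∈ A xbar)
    (hxbar : a + D xbar + ε • xbar + β • B xbar = 0) :
    ε * ⟪xbar, xbar - z⟫ ≤ ⟪xbar - z, p⟫ ∧
    ε * (‖xbar‖ * (‖xbar‖ - ‖z‖)) ≤ ε * ⟪xbar, xbar - z⟫ :=
  regularized_solution_inequality_general (fun _ _ _ hu hv ↦ hAmono hu hv)
    (isMonotoneOperatorAt_singleton.2 (hDmono · z)) (isMonotoneOperatorAt_singleton.2 (hBmono · z))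
    haz rfl hBz.symm hzsol hε.le hβ.le ha rfl rfl hxbar
end

section
/- Under the standing data, let (ε_n) and (β_n) be sequences in (0,∞) with ε_n → 0, β_n → ∞ and ε_n β_n → ∞, and for each n let x̄_n := x̄(ε_n, β_n) be the unique zero of Φ_{ε_n, β_n}. Then the sequence (x̄_n) is bounded in H and ‖B(x̄_n)‖ → 0 as n → ∞. -/
open Filter Topology MeasureTheory
open scoped RealInnerProductSpace

variable {H : Type*} [NormedAddCommGroup H] [InnerProductSpace ℝ H] [CompleteSpace H]

/-- A set-valued operator is monotone. -/
def MonoSV (A : H → Set H) : Prop :=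
  ∀ ⦃x y u v : H⦄, u ∈ A x → v ∈ A y → (0:ℝ) ≤ ⟪u - v, x - y⟫

/-- A set-valued operator is maximally monotone: it is monotone and its graph is not
properly contained in the graph of any monotone operator. -/
def MaxMonoSV (A : H → Set H) : Prop :=
  MonoSV A ∧ ∀ B : H → Set H, MonoSV B → (∀ x, A x ⊆ B x) → ∀ x, B x ⊆ A x

/-- The normal cone to `C` at `x` (empty for `x ∉ C`). -/
def nCone (C : Set H) (x : H) : Set H :=
  {ξ : H | x ∈ C ∧ ∀ y ∈ C, ⟪ξ, y - x⟫ ≤ 0}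

/-- The set-valued operator `Φ = A + D + N_C`. -/
def PhiOp (A : H → Set H) (D : H → H) (C : Set H) : H → Set H :=
  fun x => {w : H | ∃ a ∈ A x, ∃ ξ ∈ nCone C x, w = a + D x + ξ}

/-!
Fix a zero `p` of `B` at which `A` has a value. Comparing `x̄ = x̄(ε, β)` with `p` through the
monotonicity of `A + D` gives `β ⟪B x̄, x̄ - p⟫ ≤ ‖w‖ ‖x̄ - p‖ + O(ε)` for a fixed `w ∈ A p + D p`.
Coercivity and cocoercivity make `⟪B x, x - p⟫` grow at least linearly in `‖x - p‖`; as `β → ∞` this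
growth beats the factor `‖w‖`, so `x̄` stays bounded. Then `⟪B x̄, x̄ - p⟫ = O(1 / β)`, and by
cocoercivity this quantity dominates `μ ‖B x̄‖ ^ 2`.
-/

section RealEstimates

variable {ι : Type*} {l : Filter ι} {β : ι → ℝ}

lemma isBoundedUnder_le_of_penalty_estimate {r q : ι → ℝ} {c s K L : ℝ} (hc : 0 < c)
    (hL : 0 ≤ L) (hβ : Tendsto β l atTop) (hr : ∀ᶠ n in l, 0 ≤ r n)
    (growth : ∀ᶠ n in l, c * r n ≤ q n + K) (penalty : ∀ᶠ n in l, β n * q n ≤ s * r n + L) :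
    IsBoundedUnder (· ≤ ·) l r := by
  refine isBoundedUnder_of_eventually_le (a := 2 * (K + L) / c) ?_
  filter_upwards [hr, growth, penalty, hβ.eventually_ge_atTop 1,
    hβ.eventually_ge_atTop (2 * s / c)] with n hr growth penalty one_le_β hβs
  have slope_le : s ≤ c * β n / 2 := by
    rw [div_le_iff₀ hc] at hβs
    linarith
  have scaled : β n * (c * r n) ≤ β n * (c * r n / 2 + (K + L)) := calc
    β n * (c * r n) ≤ β n * (q n + K) := by gcongr
    _ ≤ s * r n + L + β n * K := by linarith
    _ ≤ c * β n / 2 * r n + β n * L + β n * K := by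
      gcongr
      exact le_mul_of_one_le_left hL one_le_β
    _ = β n * (c * r n / 2 + (K + L)) := by ring
  have halved := le_of_mul_le_mul_left scaled (by linarith)
  rw [le_div_iff₀ hc]
  linarith

lemma tendsto_zero_of_isBoundedUnder_mul_sq {u : ι → ℝ} (hβ : Tendsto β l atTop)
    (hu : IsBoundedUnder (· ≤ ·) l fun n => β n * u n ^ 2) : Tendsto u l (𝓝 0) := by
  obtain ⟨Q, hQ⟩ := hu.eventually_le
  have sqrt_lim : Tendsto (fun n => √(Q / β n)) l (𝓝 0) := by
    simpa only [Real.sqrt_zero] using (hβ.const_div_atTop Q).sqrt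
  refine squeeze_zero_norm' ?_ sqrt_lim
  filter_upwards [hQ, hβ.eventually_gt_atTop 0] with n hQ β_pos
  exact Real.abs_le_sqrt ((le_div_iff₀' β_pos).2 hQ)

end RealEstimates

section InnerProduct

variable {E : Type*} [SeminormedAddCommGroup E] [InnerProductSpace ℝ E]

lemma neg_inner_sub_right_le (x p : E) : -⟪x, x - p⟫ ≤ ‖p‖ ^ 2 / 4 := by
  have square := norm_sub_sq_real ((2 : ℝ) • x) p
  rw [norm_smul, Real.norm_two, real_inner_smul_left] at square
  rw [inner_sub_right, real_inner_self_eq_norm_sq]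
  linarith [sq_nonneg ‖(2 : ℝ) • x - p‖]

variable {B : E → E} {p : E} {μ c R : ℝ}

lemma inner_le_two_mul_inner_sub_add {x b : E} (hμ : 0 < μ) (hb : μ * ‖b‖ ^ 2 ≤ ⟪b, x - p⟫) :
    ⟪x, b⟫ ≤ 2 * ⟪b, x - p⟫ + ‖p‖ ^ 2 / (4 * μ) := by
  have young : ‖b‖ * ‖p‖ ≤ μ * ‖b‖ ^ 2 + ‖p‖ ^ 2 / (4 * μ) := by
    have square : μ * ‖b‖ ^ 2 + ‖p‖ ^ 2 / (4 * μ) - ‖b‖ * ‖p‖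
        = μ * (‖b‖ - ‖p‖ / (2 * μ)) ^ 2 := by
      field_simp
      ring
    rw [← sub_nonneg, square]
    positivity
  calc
    ⟪x, b⟫ = ⟪b, x - p⟫ + ⟪b, p⟫ := by rw [← inner_add_right, sub_add_cancel, real_inner_comm]
    _ ≤ 2 * ⟪b, x - p⟫ + ‖p‖ ^ 2 / (4 * μ) := by linarith [real_inner_le_norm b p]

lemma exists_mul_norm_sub_le_inner_sub_add (hμ : 0 < μ) (hc : 0 ≤ c)
    (hBcoco : ∀ x, μ * ‖B x‖ ^ 2 ≤ ⟪B x, x - p⟫)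
    (hBcoer : ∀ x, R ≤ ‖x‖ → c * ‖x‖ ≤ ⟪x, B x⟫) :
    ∃ K, ∀ x, c / 2 * ‖x - p‖ ≤ ⟪B x, x - p⟫ + K := by
  refine ⟨(c * |R| + ‖p‖ ^ 2 / (4 * μ) + c * ‖p‖) / 2, fun x => ?_⟩
  have norm_bound : c * ‖x‖ ≤ 2 * ⟪B x, x - p⟫ + (c * |R| + ‖p‖ ^ 2 / (4 * μ)) := by
    rcases le_total R ‖x‖ with far | near
    · linarith [hBcoer x far, inner_le_two_mul_inner_sub_add hμ (hBcoco x),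
        mul_nonneg hc (abs_nonneg R)]
    · have inner_nonneg : 0 ≤ ⟪B x, x - p⟫ := le_trans (by positivity) (hBcoco x)
      have : c * ‖x‖ ≤ c * |R| := by gcongr; exact near.trans (le_abs_self R)
      have : 0 ≤ ‖p‖ ^ 2 / (4 * μ) := by positivity
      linarith
  have triangle : c * ‖x - p‖ ≤ c * ‖x‖ + c * ‖p‖ := by
    rw [← mul_add]
    gcongr
    exact norm_sub_le x p
  linarith

end InnerProduct

section MonotonePenalty

variable {E : Type*} [NormedAddCommGroup E] [InnerProductSpace ℝ E]

lemma MonoSV.add_function {A : E → Set E} (hA : MonoSV A) {D : E → E}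
    (hD : ∀ x y, 0 ≤ ⟪D x - D y, x - y⟫) : MonoSV fun x => (· + D x) '' A x := by
  rintro x y _ _ ⟨a, ha, rfl⟩ ⟨b, hb, rfl⟩
  rw [add_sub_add_comm, inner_add_left]
  exact add_nonneg (hA ha hb) (hD x y)

lemma MonoSV.mul_inner_sub_le {T : E → Set E} (hT : MonoSV T) {x p w b : E} {ε β : ℝ}
    (hε : 0 ≤ ε) (hw : w ∈ T p) (hx : -(ε • x + β • b) ∈ T x) :
    β * ⟪b, x - p⟫ ≤ ‖w‖ * ‖x - p‖ + ε * (‖p‖ ^ 2 / 4) := by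
  have mono := hT hx hw
  rw [inner_sub_left, inner_neg_left, inner_add_left, real_inner_smul_left,
    real_inner_smul_left] at mono
  calc
    β * ⟪b, x - p⟫ ≤ -⟪w, x - p⟫ + ε * -⟪x, x - p⟫ := by linarith
    _ ≤ ‖w‖ * ‖x - p‖ + ε * (‖p‖ ^ 2 / 4) := by
      gcongr
      · exact (neg_le_abs _).trans (abs_real_inner_le_norm w (x - p))
      · exact neg_inner_sub_right_le x p

variable {B : E → E} {p : E} {μ c R : ℝ}

lemma MonoSV.isBoundedUnder_norm_sub_and_tendsto_norm_zero {ι : Type*} {l : Filter ι}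
    {T : E → Set E} (hT : MonoSV T) {w : E} (hw : w ∈ T p) (hμ : 0 < μ) (hc : 0 < c)
    (hBcoco : ∀ x, μ * ‖B x‖ ^ 2 ≤ ⟪B x, x - p⟫)
    (hBcoer : ∀ x, R ≤ ‖x‖ → c * ‖x‖ ≤ ⟪x, B x⟫) {x : ι → E} {ε β : ι → ℝ}
    (hε_nonneg : ∀ᶠ n in l, 0 ≤ ε n) (hε : IsBoundedUnder (· ≤ ·) l ε) (hβ : Tendsto β l atTop)
    (hx : ∀ᶠ n in l, -(ε n • x n + β n • B (x n)) ∈ T (x n)) :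
    IsBoundedUnder (· ≤ ·) l (fun n => ‖x n - p‖) ∧ Tendsto (fun n => ‖B (x n)‖) l (𝓝 0) := by
  obtain ⟨e, hεe⟩ := hε.eventually_le
  obtain ⟨K, growth⟩ := exists_mul_norm_sub_le_inner_sub_add hμ hc.le hBcoco hBcoer
  have penalty : ∀ᶠ n in l,
      β n * ⟪B (x n), x n - p⟫ ≤ ‖w‖ * ‖x n - p‖ + |e| * (‖p‖ ^ 2 / 4) := by
    filter_upwards [hε_nonneg, hεe, hx] with n hε_nonneg hεe hx
    refine (hT.mul_inner_sub_le hε_nonneg hw hx).trans ?_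
    gcongr
    exact hεe.trans (le_abs_self e)
  have bounded : IsBoundedUnder (· ≤ ·) l fun n => ‖x n - p‖ :=
    isBoundedUnder_le_of_penalty_estimate (half_pos hc) (by positivity) hβ
      (.of_forall fun _ => norm_nonneg _) (.of_forall fun n => growth (x n)) penalty
  refine ⟨bounded, tendsto_zero_of_isBoundedUnder_mul_sq (hβ.const_mul_atTop hμ) ?_⟩
  obtain ⟨M, hM⟩ := bounded.eventually_le
  refine isBoundedUnder_of_eventually_le (a := ‖w‖ * M + |e| * (‖p‖ ^ 2 / 4)) ?_
  filter_upwards [penalty, hM, hβ.eventually_ge_atTop 0] with n penalty hM β_nonneg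
  calc
    μ * β n * ‖B (x n)‖ ^ 2 = β n * (μ * ‖B (x n)‖ ^ 2) := by ring
    _ ≤ β n * ⟪B (x n), x n - p⟫ := by gcongr; exact hBcoco (x n)
    _ ≤ ‖w‖ * ‖x n - p‖ + |e| * (‖p‖ ^ 2 / 4) := penalty
    _ ≤ ‖w‖ * M + |e| * (‖p‖ ^ 2 / 4) := by gcongr

theorem central_path_bounded_and_B_to_zero_general {ι : Type*} {l : Filter ι} {A : E → Set E}
    (hA : MonoSV A) {D : E → E} (hD : ∀ x y, 0 ≤ ⟪D x - D y, x - y⟫) (hμ : 0 < μ) (hc : 0 < c)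
    (hBcoco : ∀ x, μ * ‖B x‖ ^ 2 ≤ ⟪B x, x - p⟫)
    (hBcoer : ∀ x, R ≤ ‖x‖ → c ≤ ⟪x, B x⟫ / ‖x‖) (hAp : (A p).Nonempty)
    {x : ι → E} {ε β : ι → ℝ} (hε_nonneg : ∀ᶠ n in l, 0 ≤ ε n)
    (hε : IsBoundedUnder (· ≤ ·) l ε) (hβ : Tendsto β l atTop)
    (hx : ∀ᶠ n in l, ∃ a ∈ A (x n), a + D (x n) + ε n • x n + β n • B (x n) = 0) :
    IsBoundedUnder (· ≤ ·) l (fun n => ‖x n‖) ∧ Tendsto (fun n => ‖B (x n)‖) l (𝓝 0) := by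
  obtain ⟨a, ha⟩ := hAp
  have linear_growth : ∀ x, R ≤ ‖x‖ → c * ‖x‖ ≤ ⟪x, B x⟫ := by
    intro x hRx
    rcases eq_or_ne x 0 with rfl | x_ne
    · simp
    · exact (le_div_iff₀ (norm_pos_iff.2 x_ne)).1 (hBcoer x hRx)
  have shifted_mem : ∀ᶠ n in l, -(ε n • x n + β n • B (x n)) ∈ (· + D (x n)) '' A (x n) := by
    filter_upwards [hx] with n ⟨a, ha, zero⟩
    exact ⟨a, ha, eq_neg_of_add_eq_zero_left (by rwa [← add_assoc])⟩
  obtain ⟨⟨M, hM⟩, lim⟩ := (hA.add_function hD).isBoundedUnder_norm_sub_and_tendsto_norm_zero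
    (Set.mem_image_of_mem _ ha) hμ hc hBcoco linear_growth hε_nonneg hε hβ shifted_mem
  refine ⟨isBoundedUnder_of_eventually_le (a := M + ‖p‖) ?_, lim⟩
  filter_upwards [eventually_map.1 hM] with n hM
  exact (norm_le_norm_sub_add (x n) p).trans (by gcongr)

end MonotonePenalty

theorem central_path_bounded_and_B_to_zero
    (A : H → Set H) (D B : H → H) (η μ : ℝ) (hη : 0 < η) (hμ : 0 < μ)
    (hAmax : MaxMonoSV A)
    (hDmono : ∀ x y : H, (0:ℝ) ≤ ⟪D x - D y, x - y⟫)
    (hDlip : ∀ x y : H, ‖D x - D y‖ ≤ (1/η) * ‖x - y‖)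
    (hBcoco : ∀ x y : H, μ * ‖B x - B y‖^2 ≤ ⟪B x - B y, x - y⟫)
    (hBcoer : ∀ M : ℝ, ∃ R : ℝ, ∀ x : H, R ≤ ‖x‖ → M ≤ ⟪x, B x⟫ / ‖x‖)
    (hCne : {x : H | B x = 0}.Nonempty)
    (hANCmax : MaxMonoSV (fun x : H =>
      {w : H | ∃ a ∈ A x, ∃ ξ ∈ nCone {z : H | B z = 0} x, w = a + ξ}))
    (hADBmax : ∀ β : ℝ, 0 < β →
      MaxMonoSV (fun x : H => {w : H | ∃ a ∈ A x, w = a + D x + β • B x}))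
    (hzer : ∃ x : H, (0:H) ∈ PhiOp A D {z : H | B z = 0} x)
    (xbar : ℝ → ℝ → H)
    (hxbar : ∀ ε β : ℝ, 0 < ε → 0 < β →
      (∃ a ∈ A (xbar ε β), a + D (xbar ε β) + ε • xbar ε β + β • B (xbar ε β) = 0) ∧
      (∀ z : H, (∃ a ∈ A z, a + D z + ε • z + β • B z = 0) → z = xbar ε β))
    (εs βs : ℕ → ℝ) (hεpos : ∀ n, 0 < εs n) (hβpos : ∀ n, 0 < βs n)
    (hε0 : Tendsto εs atTop (nhds 0)) (hβinf : Tendsto βs atTop atTop)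
    (hεβ : Tendsto (fun n => εs n * βs n) atTop atTop) :
    (∃ M : ℝ, ∀ n, ‖xbar (εs n) (βs n)‖ ≤ M) ∧
    Tendsto (fun n => ‖B (xbar (εs n) (βs n))‖) atTop (nhds 0) := by
  obtain ⟨p, a, ha, -, ⟨hp : B p = 0, -⟩, -⟩ := hzer
  obtain ⟨R, hR⟩ := hBcoer 1
  obtain ⟨bounded, lim⟩ := central_path_bounded_and_B_to_zero_general hAmax.1 hDmono hμ one_pos
    (fun x => by simpa only [hp, sub_zero] using hBcoco x p) hR ⟨a, ha⟩
    (.of_forall fun n => (hεpos n).le) hε0.isBoundedUnder_le hβinf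
    (.of_forall fun n => (hxbar _ _ (hεpos n) (hβpos n)).1)
  exact ⟨bounded.bddAbove_range.imp fun _ hM n => hM ⟨n, rfl⟩, lim⟩
end

section
/- Under the standing data, let (ε_n) and (β_n) be sequences in (0,∞) with ε_n → 0, β_n → ∞ and ε_n β_n → ∞, and for each n let x̄_n := x̄(ε_n, β_n) be the unique zero of Φ_{ε_n, β_n}. Then every weak cluster point of the sequence (x̄_n) (i.e. every weak limit of a subsequence) lies in C = {x ∈ H : B x = 0}. -/
/-!
The penalised equation and a point `z` of `dom A` with `B z = 0` are compared through the
monotone operator `A + D + ε • Id`. This bounds `⟪B x̄, x̄ - z⟫` by `⟪b + D z + ε • z, z - x̄⟫ / β`,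
which vanishes along a weakly convergent net because `1 / β → 0` and `ε / β → 0`. Cocoercivity then
gives `B x̄ → B z = 0` strongly. Feeding this back into the cocoercivity inequality between `x̄` and
its weak limit `xinf` gives `B x̄ → B xinf`, so `B xinf = 0` by uniqueness of limits.
-/

open Filter Topology MeasureTheory
open scoped RealInnerProductSpace

variable {H : Type*} [NormedAddCommGroup H] [InnerProductSpace ℝ H] [CompleteSpace H]

section General

variable {E ι : Type*} [NormedAddCommGroup E] [InnerProductSpace ℝ E] {l : Filter ι}

/-- `B` is `μ`-cocoercive (inversely strongly monotone with constant `μ`); positivity of `μ` is not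
built in. This is what turns bounds on `⟪B x - B y, x - y⟫` into strong convergence. -/
def IsCocoercive (μ : ℝ) (B : E → E) : Prop :=
  ∀ x y : E, μ * ‖B x - B y‖ ^ 2 ≤ ⟪B x - B y, x - y⟫

/-- Weak convergence of `x` to `a` along the filter `l`, tested against the vectors of `E` rather
than against its dual; the two notions agree when `E` is complete. It encodes the cluster points of
`x`, with `l` the filter of a subsequence. -/
def WeakTendsto (x : ι → E) (l : Filter ι) (a : E) : Prop :=
  ∀ y : E, Tendsto (fun i => ⟪x i, y⟫) l (𝓝 ⟪a, y⟫)

theorem WeakTendsto.inner_sub {x : ι → E} {a : E} (hx : WeakTendsto x l a) (p q : E) :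
    Tendsto (fun i => ⟪p, x i - q⟫) l (𝓝 ⟪p, a - q⟫) := by
  simpa only [real_inner_comm _ p, inner_sub_left] using (hx p).sub_const ⟪q, p⟫

theorem IsCocoercive.tendsto_of_inner_le {μ : ℝ} {B : E → E} (hB : IsCocoercive μ B) (hμ : 0 < μ)
    {x : ι → E} {y : E} {c : ι → ℝ} (hc : Tendsto c l (𝓝 0))
    (hle : ∀ᶠ i in l, ⟪B (x i) - B y, x i - y⟫ ≤ c i) :
    Tendsto (fun i => B (x i)) l (𝓝 (B y)) := by
  have hsq : Tendsto (fun i => ‖B (x i) - B y‖ ^ 2) l (𝓝 0) := by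
    refine squeeze_zero' (.of_forall fun i => sq_nonneg _) ?_
      (by simpa only [mul_zero] using hc.const_mul μ⁻¹)
    filter_upwards [hle] with i hi
    exact (le_inv_mul_iff₀ hμ).2 ((hB (x i) y).trans hi)
  rw [tendsto_iff_norm_sub_tendsto_zero]
  simpa only [Real.sqrt_sq (norm_nonneg _), Real.sqrt_zero] using hsq.sqrt

theorem IsCocoercive.apply_eq_of_weakTendsto [l.NeBot] {μ : ℝ} {B : E → E}
    (hB : IsCocoercive μ B) (hμ : 0 < μ) {x : ι → E} {a z : E} (hx : WeakTendsto x l a)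
    {c : ι → ℝ} (hc : Tendsto c l (𝓝 0))
    (hle : ∀ᶠ i in l, ⟪B (x i) - B z, x i - z⟫ ≤ c i) :
    B a = B z := by
  have hBz : Tendsto (fun i => B (x i)) l (𝓝 (B z)) := hB.tendsto_of_inner_le hμ hc hle
  have hstrong : Tendsto (fun i => ⟪B (x i) - B z, z - a⟫) l (𝓝 0) := by
    simpa only [sub_self, inner_zero_left] using
      (hBz.sub_const (B z)).inner (tendsto_const_nhds (x := z - a))
  have hweak : Tendsto (fun i => ⟪B z - B a, x i - a⟫) l (𝓝 0) := by
    simpa only [sub_self, inner_zero_right] using hx.inner_sub (B z - B a) a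
  have hsum : Tendsto (fun i => c i + ⟪B (x i) - B z, z - a⟫ + ⟪B z - B a, x i - a⟫) l (𝓝 0) := by
    simpa only [add_zero] using (hc.add hstrong).add hweak
  refine tendsto_nhds_unique (hB.tendsto_of_inner_le hμ hsum ?_) hBz
  filter_upwards [hle] with i hi
  calc ⟪B (x i) - B a, x i - a⟫
      = ⟪B (x i) - B z, x i - z⟫ + ⟪B (x i) - B z, z - a⟫ + ⟪B z - B a, x i - a⟫ := by
        rw [← inner_add_right, sub_add_sub_cancel, ← inner_add_left, sub_add_sub_cancel]
    _ ≤ c i + ⟪B (x i) - B z, z - a⟫ + ⟪B z - B a, x i - a⟫ := by gcongr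

theorem mul_inner_le_of_add_smul_add_smul_eq_zero {p q w x z : E} {ε β : ℝ}
    (hpq : 0 ≤ ⟪p - q, x - z⟫) (hε : 0 ≤ ε) (hx : p + ε • x + β • w = 0) :
    β * ⟪w, x - z⟫ ≤ -⟪q + ε • z, x - z⟫ := by
  have hmono : 0 ≤ ⟪(p + ε • x) - (q + ε • z), x - z⟫ := by
    rw [add_sub_add_comm, ← smul_sub, inner_add_left, real_inner_smul_left]
    exact add_nonneg hpq (mul_nonneg hε real_inner_self_nonneg)
  rw [eq_neg_of_add_eq_zero_left hx, inner_sub_left, inner_neg_left, real_inner_smul_left] at hmono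
  linarith

theorem WeakTendsto.tendsto_inv_mul_neg_inner {x : ι → E} {a : E} (hx : WeakTendsto x l a)
    {ε β : ι → ℝ} (hβ : Tendsto β l atTop) (hεβ : Tendsto (fun i => ε i / β i) l (𝓝 0))
    (q z : E) :
    Tendsto (fun i => (β i)⁻¹ * -⟪q + ε i • z, x i - z⟫) l (𝓝 0) := by
  have hlim : Tendsto (fun i => (β i)⁻¹ * ⟪q, x i - z⟫ + ε i / β i * ⟪z, x i - z⟫) l (𝓝 0) := by
    simpa only [Pi.inv_apply, zero_mul, add_zero] using
      (hβ.inv_tendsto_atTop.mul (hx.inner_sub q z)).add (hεβ.mul (hx.inner_sub z z))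
  rw [← neg_zero]
  refine hlim.neg.congr fun i => ?_
  rw [inner_add_left, real_inner_smul_left]
  ring

theorem weak_cluster_points_feasible_general [l.NeBot] {A : E → Set E} {D B : E → E} {μ : ℝ}
    (hμ : 0 < μ)
    (hA : ∀ ⦃x y u v : E⦄, u ∈ A x → v ∈ A y → 0 ≤ ⟪u - v, x - y⟫)
    (hD : ∀ x y : E, 0 ≤ ⟪D x - D y, x - y⟫)
    (hB : IsCocoercive μ B)
    (hfeas : ∃ z, (A z).Nonempty ∧ B z = 0)
    {ε β : ι → ℝ} (hε : ∀ i, 0 ≤ ε i) (hβ : Tendsto β l atTop)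
    (hεβ : Tendsto (fun i => ε i / β i) l (𝓝 0))
    {x : ι → E} (hx : ∀ i, ∃ a ∈ A (x i), a + D (x i) + ε i • x i + β i • B (x i) = 0)
    {xinf : E} (hweak : WeakTendsto x l xinf) :
    B xinf = 0 := by
  obtain ⟨z, ⟨b, hb⟩, hBz⟩ := hfeas
  rw [← hBz]
  refine hB.apply_eq_of_weakTendsto hμ hweak
    (hweak.tendsto_inv_mul_neg_inner hβ hεβ (b + D z) z) ?_
  filter_upwards [hβ.eventually_gt_atTop 0] with i hβi
  obtain ⟨a, ha, hxi⟩ := hx i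
  have hAD : 0 ≤ ⟪(a + D (x i)) - (b + D z), x i - z⟫ := by
    rw [add_sub_add_comm, inner_add_left]
    exact add_nonneg (hA ha hb) (hD (x i) z)
  rw [hBz, sub_zero]
  exact (le_inv_mul_iff₀ hβi).2 (mul_inner_le_of_add_smul_add_smul_eq_zero hAD (hε i) hxi)

end General

theorem weak_cluster_points_feasible
    (A : H → Set H) (D B : H → H) (η μ : ℝ) (hη : 0 < η) (hμ : 0 < μ)
    (hAmax : MaxMonoSV A)
    (hDmono : ∀ x y : H, (0:ℝ) ≤ ⟪D x - D y, x - y⟫)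
    (hDlip : ∀ x y : H, ‖D x - D y‖ ≤ (1/η) * ‖x - y‖)
    (hBcoco : ∀ x y : H, μ * ‖B x - B y‖^2 ≤ ⟪B x - B y, x - y⟫)
    (hBcoer : ∀ M : ℝ, ∃ R : ℝ, ∀ x : H, R ≤ ‖x‖ → M ≤ ⟪x, B x⟫ / ‖x‖)
    (hCne : {x : H | B x = 0}.Nonempty)
    (hANCmax : MaxMonoSV (fun x : H =>
      {w : H | ∃ a ∈ A x, ∃ ξ ∈ nCone {z : H | B z = 0} x, w = a + ξ}))
    (hADBmax : ∀ β : ℝ, 0 < β →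
      MaxMonoSV (fun x : H => {w : H | ∃ a ∈ A x, w = a + D x + β • B x}))
    (hzer : ∃ x : H, (0:H) ∈ PhiOp A D {z : H | B z = 0} x)
    (xbar : ℝ → ℝ → H)
    (hxbar : ∀ ε β : ℝ, 0 < ε → 0 < β →
      (∃ a ∈ A (xbar ε β), a + D (xbar ε β) + ε • xbar ε β + β • B (xbar ε β) = 0) ∧
      (∀ z : H, (∃ a ∈ A z, a + D z + ε • z + β • B z = 0) → z = xbar ε β))
    (εs βs : ℕ → ℝ) (hεpos : ∀ n, 0 < εs n) (hβpos : ∀ n, 0 < βs n)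
    (hε0 : Tendsto εs atTop (nhds 0)) (hβinf : Tendsto βs atTop atTop)
    (hεβ : Tendsto (fun n => εs n * βs n) atTop atTop) :
    ∀ xinf : H,
    (∃ φ : ℕ → ℕ, StrictMono φ ∧
      ∀ y : H, Tendsto (fun k => ⟪xbar (εs (φ k)) (βs (φ k)), y⟫) atTop
        (nhds ⟪xinf, y⟫)) →
    B xinf = 0 := by
  rintro xinf ⟨φ, hφ, hweak⟩
  obtain ⟨z, a, ha, -, ⟨hz, -⟩, -⟩ := hzer
  exact weak_cluster_points_feasible_general hμ hAmax.1 hDmono hBcoco ⟨z, ⟨a, ha⟩, hz⟩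
    (fun k => (hεpos (φ k)).le) (hβinf.comp hφ.tendsto_atTop)
    ((hε0.div_atTop hβinf).comp hφ.tendsto_atTop)
    (fun k => (hxbar _ _ (hεpos (φ k)) (hβpos (φ k))).1) hweak
end

section
/- Under the standing data, let (ε_n) and (β_n) be sequences in (0,∞) with ε_n → 0, β_n → ∞ and ε_n β_n → ∞, and for each n let x̄_n := x̄(ε_n, β_n) be the unique zero of Φ_{ε_n, β_n}. Then every weak cluster point of the sequence (x̄_n) lies in zer(Φ) = {x : 0 ∈ A x + D x + N_C(x)}. -/
open Filter Topology MeasureTheory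
open scoped RealInnerProductSpace

variable {H : Type*} [NormedAddCommGroup H] [InnerProductSpace ℝ H] [CompleteSpace H]

/-!
Let `x` be the weak limit of zeros `X i` of `A + D + ε i • Id + β i • B`. Monotonicity of `A + D`
gives, for `w ∈ (A + D) u`, the estimate
`β i * ⟪B (X i), X i - u⟫ ≤ ε i * (‖u‖ ^ 2 / 4) - ⟪w, X i - u⟫`.
Taking `u` in `C` and dividing by `β i → ∞` shows `⟪B (X i), X i - u⟫ → 0`, so that `B x = 0` by
cocoercivity. The left-hand side being eventually nonnegative, passing to the limit gives
`⟪w, x - u⟫ ≤ 0`: thus `(x, 0)` is monotonically related to the graph of `A + D + N_C`, and it lies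
in that graph because `A + N_C + D` is maximally monotone.

Maximality of `T + D` for `T` maximally monotone and `D` monotone and Lipschitz rests on Minty's
theorem: `T + l • Id` is surjective with `l⁻¹`-Lipschitz inverse, so for `l` larger than the
Lipschitz constant of `D` a contraction has a fixed point. Minty's theorem in turn follows by
minimizing the Fitzpatrick function plus `‖·‖ ^ 2 / 2` over `H × H`.
-/

open scoped NNReal

section MonotoneOperators

omit [CompleteSpace H]

variable {T : H → Set H}

lemma maxMonoSV_iff :
    MaxMonoSV T ↔ ∀ x u, u ∈ T x ↔ ∀ y v, v ∈ T y → 0 ≤ ⟪u - v, x - y⟫ := by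
  refine ⟨fun hT x u => ⟨fun hu y v hv => hT.1 hu hv, fun h => ?_⟩, fun h => ⟨?_, ?_⟩⟩
  · refine hT.2 (fun z => T z ∪ {w | z = x ∧ w = u}) ?_ (fun z => Set.subset_union_left) x
      (Or.inr ⟨rfl, rfl⟩)
    rintro a b c d (hc | ⟨rfl, rfl⟩) (hd | ⟨rfl, rfl⟩)
    · exact hT.1 hc hd
    · rw [← inner_neg_neg, neg_sub, neg_sub]
      exact h _ _ hc
    · exact h _ _ hd
    · simp
  · exact fun x y u v hu hv => (h x u).1 hu y v hv
  · exact fun S hS hTS x u hu => (h x u).2 fun y v hv => hS hu (hTS y hv)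

lemma MaxMonoSV.mem_iff (hT : MaxMonoSV T) {x u : H} :
    u ∈ T x ↔ ∀ y v, v ∈ T y → 0 ≤ ⟪u - v, x - y⟫ :=
  maxMonoSV_iff.1 hT x u

lemma MaxMonoSV.exists_mem (hT : MaxMonoSV T) : ∃ x u, u ∈ T x := by
  by_contra! h
  exact h 0 0 (hT.mem_iff.2 fun y v hv => absurd hv (h y v))

lemma MonoSV.add_map (hT : MonoSV T) {D : H → H} (hD : ∀ x y, 0 ≤ ⟪D x - D y, x - y⟫) :
    MonoSV fun x => {w | ∃ a ∈ T x, w = a + D x} := by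
  rintro x y _ _ ⟨a, ha, rfl⟩ ⟨b, hb, rfl⟩
  rw [add_sub_add_comm, inner_add_left]
  exact add_nonneg (hT ha hb) (hD x y)

lemma MonoSV.mul_norm_sub_le (hT : MonoSV T) {l : ℝ} {x y p q : H}
    (hx : p - l • x ∈ T x) (hy : q - l • y ∈ T y) : l * ‖x - y‖ ≤ ‖p - q‖ := by
  have hmono : l * ‖x - y‖ ^ 2 ≤ ⟪p - q, x - y⟫ := by
    have h := hT hx hy
    rwa [sub_sub_sub_comm, ← smul_sub, inner_sub_left, real_inner_smul_left,
      real_inner_self_eq_norm_sq, sub_nonneg] at h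
  rcases (norm_nonneg (x - y)).eq_or_lt with h0 | hpos
  · rw [← h0, mul_zero]
    exact norm_nonneg _
  · refine le_of_mul_le_mul_right ?_ hpos
    calc l * ‖x - y‖ * ‖x - y‖ = l * ‖x - y‖ ^ 2 := by ring
      _ ≤ ⟪p - q, x - y⟫ := hmono
      _ ≤ ‖p - q‖ * ‖x - y‖ := real_inner_le_norm _ _

lemma MonoSV.maxMonoSV_of_forall_exists_sub_smul_mem (hT : MonoSV T) {l : ℝ} (hl : 0 < l)
    (h : ∀ w, ∃ x, w - l • x ∈ T x) : MaxMonoSV T := by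
  refine maxMonoSV_iff.2 fun x u => ⟨fun hu y v hv => hT hu hv, fun hrel => ?_⟩
  obtain ⟨y, hy⟩ := h (u + l • x)
  have hle := hrel y _ hy
  rw [show u - (u + l • x - l • y) = -(l • (x - y)) by module, inner_neg_left,
    real_inner_smul_left, real_inner_self_eq_norm_sq, neg_nonneg] at hle
  have hxy : x = y := by
    have hsq := nonpos_of_mul_nonpos_right hle hl
    rwa [sq_nonpos_iff, norm_eq_zero, sub_eq_zero] at hsq
  rwa [← hxy, add_sub_cancel_right] at hy

lemma MaxMonoSV.preimage_add_smul (hT : MaxMonoSV T) {l : ℝ} (hl : 0 < l) (w : H) :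
    MaxMonoSV fun x => {v | w + l • v ∈ T x} := by
  refine maxMonoSV_iff.2 fun x u => hT.mem_iff.trans ⟨fun h y v hv => ?_, fun h y v hv => ?_⟩
  · have hle := h y _ hv
    rwa [add_sub_add_left_eq_sub, ← smul_sub, real_inner_smul_left,
      mul_nonneg_iff_of_pos_left hl] at hle
  · have hv' : w + l • l⁻¹ • (v - w) = v := by rw [smul_inv_smul₀ hl.ne', add_sub_cancel]
    rw [← hv', add_sub_add_left_eq_sub, ← smul_sub, real_inner_smul_left]
    exact mul_nonneg hl.le (h y _ (by rwa [Set.mem_ofPred_eq, hv']))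

end MonotoneOperators

section QuadraticMinimization

variable {S : Set (H × ℝ)}

omit [CompleteSpace H] in
lemma norm_fst_sub_sq_le_of_forall_le (hS : Convex ℝ S) {m : ℝ}
    (hm : ∀ p ∈ S, m ≤ p.2 + ‖p.1‖ ^ 2 / 2) {p q : H × ℝ} (hp : p ∈ S) (hq : q ∈ S) :
    ‖p.1 - q.1‖ ^ 2 ≤ 4 * (p.2 + ‖p.1‖ ^ 2 / 2 - m) + 4 * (q.2 + ‖q.1‖ ^ 2 / 2 - m) := by
  have hmid := hm _ (hS hp hq (by norm_num : (0 : ℝ) ≤ 1 / 2) (by norm_num : (0 : ℝ) ≤ 1 / 2)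
    (by norm_num))
  rw [← smul_add, Prod.smul_fst, Prod.smul_snd, Prod.fst_add, Prod.snd_add, norm_smul, mul_pow,
    norm_add_sq_real, smul_eq_mul] at hmid
  rw [norm_sub_sq_real]
  norm_num at hmid
  linarith

lemma exists_isMinOn_add_norm_sq (hne : S.Nonempty) (hS : Convex ℝ S) (hcl : IsClosed S)
    (hbdd : BddBelow ((fun p : H × ℝ => p.2 + ‖p.1‖ ^ 2 / 2) '' S)) :
    ∃ p ∈ S, IsMinOn (fun p : H × ℝ => p.2 + ‖p.1‖ ^ 2 / 2) S p := by
  set J : H × ℝ → ℝ := fun p => p.2 + ‖p.1‖ ^ 2 / 2 with hJ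
  obtain ⟨c, hanti, hc, hmem⟩ := exists_seq_tendsto_sInf (hne.image J) hbdd
  choose p hpS hpc using hmem
  have hle : ∀ q ∈ S, sInf (J '' S) ≤ J q := fun q hq => csInf_le hbdd ⟨q, hq, rfl⟩
  have hcauchy : CauchySeq fun n => (p n).1 := by
    refine cauchySeq_of_le_tendsto_0 (fun N => √(8 * (c N - sInf (J '' S))))
      (fun n k N hn hk => ?_) ?_
    · have hdist := norm_fst_sub_sq_le_of_forall_le hS hle (hpS n) (hpS k)
      have hn' : J (p n) ≤ c N := (hpc n).trans_le (hanti hn)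
      have hk' : J (p k) ≤ c N := (hpc k).trans_le (hanti hk)
      simp only [hJ] at hn' hk'
      rw [dist_eq_norm]
      exact Real.le_sqrt_of_sq_le (by linarith)
    · simpa using ((hc.sub_const (sInf (J '' S))).const_mul 8).sqrt
  obtain ⟨z, hz⟩ := cauchySeq_tendsto_of_complete hcauchy
  have hr : Tendsto (fun n => (p n).2) atTop (𝓝 (sInf (J '' S) - ‖z‖ ^ 2 / 2)) := by
    refine (hc.sub ((hz.norm.pow 2).div_const 2)).congr fun n => ?_
    rw [← hpc n, hJ, add_sub_cancel_right]
  refine ⟨(z, sInf (J '' S) - ‖z‖ ^ 2 / 2),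
    hcl.mem_of_tendsto (hz.prodMk_nhds hr) (Eventually.of_forall hpS), fun q hq => ?_⟩
  simpa [hJ] using hle q hq

omit [CompleteSpace H] in
lemma sub_add_inner_nonneg_of_isMinOn (hS : Convex ℝ S) {p q : H × ℝ} (hp : p ∈ S) (hq : q ∈ S)
    (hmin : IsMinOn (fun p : H × ℝ => p.2 + ‖p.1‖ ^ 2 / 2) S p) :
    0 ≤ q.2 - p.2 + ⟪p.1, q.1 - p.1⟫ := by
  have hderiv : HasFDerivAt (fun p : H × ℝ => p.2 + ‖p.1‖ ^ 2 / 2) _ p :=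
    hasFDerivAt_snd.add (hasFDerivAt_fst.norm_sq.mul_const (2⁻¹ : ℝ))
  have h := hmin.localize.hasFDerivWithinAt_nonneg hderiv.hasFDerivWithinAt
    (sub_mem_posTangentConeAt_of_segment_subset (hS.segment_subset hp hq))
  simpa using h

end QuadraticMinimization

section Minty

variable {T : H → Set H}

/-- The epigraph of the Fitzpatrick function `F_T(x, u) = sup_{v ∈ T y} ⟪x, v⟫ + ⟪y, u⟫ - ⟪y, v⟫` of
an operator `T`; working with the epigraph avoids the value `+∞` of `F_T`. -/
def fitzpatrickEpigraph (T : H → Set H) : Set (WithLp 2 (H × H) × ℝ) :=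
  {p | ∀ y v, v ∈ T y → ⟪p.1.fst, v⟫ + ⟪y, p.1.snd⟫ - ⟪y, v⟫ ≤ p.2}

omit [CompleteSpace H] in
lemma isClosed_fitzpatrickEpigraph : IsClosed (fitzpatrickEpigraph T) := by
  simp only [fitzpatrickEpigraph, Set.ofPred_forall]
  exact isClosed_iInter fun y => isClosed_iInter fun v => isClosed_iInter fun _ =>
    isClosed_le (by fun_prop) (by fun_prop)

omit [CompleteSpace H] in
lemma convex_fitzpatrickEpigraph : Convex ℝ (fitzpatrickEpigraph T) := by
  intro p hp q hq a b ha hb hab y v hv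
  have hpq := add_le_add (mul_le_mul_of_nonneg_left (hp y v hv) ha)
    (mul_le_mul_of_nonneg_left (hq y v hv) hb)
  simp only [Prod.fst_add, Prod.snd_add, Prod.smul_fst, Prod.smul_snd, WithLp.add_fst,
    WithLp.add_snd, WithLp.smul_fst, WithLp.smul_snd, inner_add_left, inner_add_right,
    real_inner_smul_left, real_inner_smul_right, smul_eq_mul]
  linear_combination hpq + ⟪y, v⟫ * hab

omit [CompleteSpace H] in
lemma MonoSV.mem_fitzpatrickEpigraph (hT : MonoSV T) {y v : H} (hv : v ∈ T y) :
    (WithLp.toLp 2 (y, v), ⟪y, v⟫) ∈ fitzpatrickEpigraph T := by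
  intro z w hw
  have h := hT hv hw
  change ⟪y, w⟫ + ⟪z, v⟫ - ⟪z, w⟫ ≤ ⟪y, v⟫
  rw [inner_sub_left, inner_sub_right, inner_sub_right, real_inner_comm y v, real_inner_comm z v,
    real_inner_comm y w, real_inner_comm z w] at h
  linarith

omit [CompleteSpace H] in
lemma MaxMonoSV.inner_le_of_mem_fitzpatrickEpigraph (hT : MaxMonoSV T)
    {p : WithLp 2 (H × H) × ℝ} (hp : p ∈ fitzpatrickEpigraph T) :
    ⟪p.1.fst, p.1.snd⟫ ≤ p.2 := by
  by_contra! hlt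
  have hmem : p.1.snd ∈ T p.1.fst := by
    refine hT.mem_iff.2 fun y v hv => ?_
    have h := hp y v hv
    simp only [inner_sub_left, inner_sub_right, real_inner_comm] at h hlt ⊢
    linarith
  have h := hp _ _ hmem
  linarith

omit [CompleteSpace H] in
lemma MaxMonoSV.bddBelow_fitzpatrickEpigraph (hT : MaxMonoSV T) :
    BddBelow ((fun p : WithLp 2 (H × H) × ℝ => p.2 + ‖p.1‖ ^ 2 / 2) '' fitzpatrickEpigraph T) := by
  refine ⟨0, Set.forall_mem_image.2 fun p hp => ?_⟩
  have hinner := hT.inner_le_of_mem_fitzpatrickEpigraph hp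
  have hsq := sq_nonneg ‖p.1.fst + p.1.snd‖
  rw [norm_add_sq_real] at hsq
  rw [WithLp.prod_norm_sq_eq_of_L2]
  linarith

lemma MaxMonoSV.exists_forall_norm_add_sq_le (hT : MaxMonoSV T) :
    ∃ x u, ∀ y v, v ∈ T y → ‖x + u‖ ^ 2 ≤ ⟪-x - v, -u - y⟫ := by
  obtain ⟨y₀, v₀, hv₀⟩ := hT.exists_mem
  obtain ⟨⟨⟨⟨x, u⟩⟩, r⟩, hp, hmin⟩ := exists_isMinOn_add_norm_sq
    ⟨_, hT.1.mem_fitzpatrickEpigraph hv₀⟩ convex_fitzpatrickEpigraph isClosed_fitzpatrickEpigraph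
    hT.bddBelow_fitzpatrickEpigraph
  refine ⟨x, u, fun y v hv => ?_⟩
  have hvar : 0 ≤ ⟪y, v⟫ - r + (⟪x, y - x⟫ + ⟪u, v - u⟫) :=
    sub_add_inner_nonneg_of_isMinOn (S := fitzpatrickEpigraph T) convex_fitzpatrickEpigraph hp
      (hT.1.mem_fitzpatrickEpigraph hv) hmin
  have hinner : ⟪x, u⟫ ≤ r := hT.inner_le_of_mem_fitzpatrickEpigraph hp
  calc ‖x + u‖ ^ 2 ≤ ‖x + u‖ ^ 2 + (r - ⟪x, u⟫) + (⟪y, v⟫ - r + (⟪x, y - x⟫ + ⟪u, v - u⟫)) := by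
        linarith
    _ = ⟪-x - v, -u - y⟫ := by
        rw [norm_add_sq_real]
        simp only [inner_sub_left, inner_sub_right, inner_neg_left, inner_neg_right,
          real_inner_self_eq_norm_sq, real_inner_comm]
        ring

lemma MaxMonoSV.exists_neg_mem (hT : MaxMonoSV T) : ∃ x, -x ∈ T x := by
  obtain ⟨x, u, h⟩ := hT.exists_forall_norm_add_sq_le
  have hmem : -x ∈ T (-u) := hT.mem_iff.2 fun y v hv => (sq_nonneg _).trans (h y v hv)
  have hxu : x + u = 0 := by simpa using h _ _ hmem
  rw [← eq_neg_of_add_eq_zero_left hxu] at hmem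
  exact ⟨x, hmem⟩

lemma MaxMonoSV.exists_sub_smul_mem (hT : MaxMonoSV T) {l : ℝ} (hl : 0 < l) (w : H) :
    ∃ x, w - l • x ∈ T x := by
  obtain ⟨x, hx⟩ := (hT.preimage_add_smul hl w).exists_neg_mem
  exact ⟨x, by simpa [sub_eq_add_neg] using hx⟩

end Minty

section LipschitzPerturbation

variable {T : H → Set H} {D : H → H} {K : ℝ≥0}

lemma MaxMonoSV.exists_sub_smul_sub_map_mem (hT : MaxMonoSV T) (hD : LipschitzWith K D)
    {l : ℝ} (hl : K < l) (w : H) : ∃ x, w - l • x - D x ∈ T x := by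
  have hl0 : 0 < l := K.2.trans_lt hl
  lift l to ℝ≥0 using hl0.le
  choose R hR using hT.exists_sub_smul_mem hl0
  have hcontr : ContractingWith (K / l) fun x => R (w - D x) := by
    refine ⟨(div_lt_one₀ (by exact_mod_cast hl0)).2 (by exact_mod_cast hl),
      LipschitzWith.of_dist_le_mul fun x y => ?_⟩
    rw [NNReal.coe_div, div_mul_eq_mul_div, le_div_iff₀' hl0, dist_eq_norm]
    calc l * ‖R (w - D x) - R (w - D y)‖ ≤ ‖(w - D x) - (w - D y)‖ :=
          hT.1.mul_norm_sub_le (hR _) (hR _)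
      _ = dist (D x) (D y) := by rw [sub_sub_sub_cancel_left, ← dist_eq_norm, dist_comm]
      _ ≤ K * dist x y := hD.dist_le_mul x y
  obtain ⟨x, hx, -⟩ := hcontr.exists_fixedPoint 0 (edist_ne_top _ _)
  have hmem := hR (w - D x)
  rw [show R (w - D x) = x from hx, sub_right_comm] at hmem
  exact ⟨x, hmem⟩

lemma MaxMonoSV.add_lipschitz (hT : MaxMonoSV T) (hDmono : ∀ x y, 0 ≤ ⟪D x - D y, x - y⟫)
    (hD : LipschitzWith K D) : MaxMonoSV fun x => {w | ∃ a ∈ T x, w = a + D x} := by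
  refine (hT.1.add_map hDmono).maxMonoSV_of_forall_exists_sub_smul_mem
    (l := K + 1) (by positivity) fun w => ?_
  obtain ⟨x, hx⟩ := hT.exists_sub_smul_sub_map_mem hD (lt_add_one (K : ℝ)) w
  exact ⟨x, _, hx, (sub_add_cancel _ _).symm⟩

lemma maxMonoSV_phiOp {C : Set H}
    (hT : MaxMonoSV fun x => {w | ∃ a ∈ T x, ∃ ξ ∈ nCone C x, w = a + ξ})
    (hDmono : ∀ x y, 0 ≤ ⟪D x - D y, x - y⟫) (hD : LipschitzWith K D) :
    MaxMonoSV (PhiOp T D C) := by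
  convert hT.add_lipschitz hDmono hD using 1
  ext x w
  constructor
  · rintro ⟨a, ha, ξ, hξ, rfl⟩
    exact ⟨_, ⟨a, ha, ξ, hξ, rfl⟩, add_right_comm _ _ _⟩
  · rintro ⟨_, ⟨a, ha, ξ, hξ, rfl⟩, rfl⟩
    exact ⟨a, ha, ξ, hξ, add_right_comm _ _ _⟩

end LipschitzPerturbation

section Penalization

omit [CompleteSpace H]

lemma MonoSV.inner_le_of_add_smul_add_eq_zero {T : H → Set H} (hT : MonoSV T) {x u v w z : H}
    {ε : ℝ} (hε : 0 ≤ ε) (hv : v ∈ T x) (hzero : v + ε • x + z = 0) (hw : w ∈ T u) :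
    ⟪z, x - u⟫ ≤ ε * (‖u‖ ^ 2 / 4) - ⟪w, x - u⟫ := by
  have hx : -(‖u‖ ^ 2 / 4) ≤ ⟪x, x - u⟫ := by
    rw [inner_sub_right, real_inner_self_eq_norm_sq]
    nlinarith [real_inner_le_norm x u, sq_nonneg (‖x‖ - ‖u‖ / 2)]
  have hz : z = -(v - w) - ε • x - w := by
    rw [eq_neg_of_add_eq_zero_right hzero]
    abel
  calc ⟪z, x - u⟫ = -⟪v - w, x - u⟫ - ε * ⟪x, x - u⟫ - ⟪w, x - u⟫ := by
        rw [hz, inner_sub_left, inner_sub_left, inner_neg_left, real_inner_smul_left]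
    _ ≤ ε * (‖u‖ ^ 2 / 4) - ⟪w, x - u⟫ := by
        linarith [hT hv hw, mul_le_mul_of_nonneg_left hx hε]

variable {ι : Type*} {l : Filter ι} {X : ι → H} {x : H}

lemma tendsto_inner_sub_of_weak (hX : ∀ y, Tendsto (fun i => ⟪X i, y⟫) l (𝓝 ⟪x, y⟫)) (w u : H) :
    Tendsto (fun i => ⟪w, X i - u⟫) l (𝓝 ⟪w, x - u⟫) := by
  simpa only [inner_sub_right, real_inner_comm] using (hX w).sub_const ⟪w, u⟫

section Cocoercive

variable {B : H → H} {μ : ℝ}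

lemma inner_map_sub_nonneg_of_cocoercive (hμ : 0 ≤ μ)
    (hB : ∀ x y, μ * ‖B x - B y‖ ^ 2 ≤ ⟪B x - B y, x - y⟫) {u : H} (hu : B u = 0) (x : H) :
    0 ≤ ⟪B x, x - u⟫ := by
  have h := hB x u
  rw [hu, sub_zero] at h
  exact (by positivity : 0 ≤ μ * ‖B x‖ ^ 2).trans h

omit [InnerProductSpace ℝ H] in
lemma tendsto_zero_of_mul_norm_sq_le (hμ : 0 < μ) {s : ι → ℝ} (h : ∀ i, μ * ‖X i‖ ^ 2 ≤ s i)
    (hs : Tendsto s l (𝓝 0)) : Tendsto X l (𝓝 0) := by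
  have hroot : Tendsto (fun i => √(s i / μ)) l (𝓝 0) := by simpa using (hs.div_const μ).sqrt
  exact squeeze_zero_norm (fun i => Real.le_sqrt_of_sq_le ((le_div_iff₀' hμ).2 (h i))) hroot

lemma map_eq_zero_of_tendsto_inner_of_cocoercive [l.NeBot] (hμ : 0 < μ)
    (hB : ∀ x y, μ * ‖B x - B y‖ ^ 2 ≤ ⟪B x - B y, x - y⟫) {p : H} (hp : B p = 0)
    (hX : ∀ y, Tendsto (fun i => ⟪X i, y⟫) l (𝓝 ⟪x, y⟫))
    (hinner : Tendsto (fun i => ⟪B (X i), X i - p⟫) l (𝓝 0)) : B x = 0 := by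
  have hBX : Tendsto (fun i => B (X i)) l (𝓝 0) :=
    tendsto_zero_of_mul_norm_sq_le hμ (fun i => by simpa [hp] using hB (X i) p) hinner
  have hBXx : Tendsto (fun i => B (X i) - B x) l (𝓝 0) := by
    refine tendsto_zero_of_mul_norm_sq_le hμ (fun i => hB (X i) x) ?_
    have hlim := (hinner.add (hBX.inner (tendsto_const_nhds (x := p - x)))).sub
      (tendsto_inner_sub_of_weak hX (B x) x)
    simpa [← inner_add_right, ← inner_sub_left] using hlim
  exact tendsto_nhds_unique (tendsto_sub_nhds_zero_iff.1 hBXx) hBX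

end Cocoercive

variable {T : H → Set H} {B : H → H} {ε β : ι → ℝ}

lemma MonoSV.tendsto_inner_map_sub_zero (hT : MonoSV T) {p w : H} (hw : w ∈ T p)
    (hB : ∀ i, 0 ≤ ⟪B (X i), X i - p⟫) (hε : ∀ i, 0 ≤ ε i) (hε0 : Tendsto ε l (𝓝 0))
    (hβ : Tendsto β l atTop) (hzero : ∀ i, ∃ v ∈ T (X i), v + ε i • X i + β i • B (X i) = 0)
    (hX : ∀ y, Tendsto (fun i => ⟪X i, y⟫) l (𝓝 ⟪x, y⟫)) :
    Tendsto (fun i => ⟪B (X i), X i - p⟫) l (𝓝 0) := by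
  have hbound : Tendsto (fun i => (ε i * (‖p‖ ^ 2 / 4) - ⟪w, X i - p⟫) / β i) l (𝓝 0) :=
    ((hε0.mul_const _).sub (tendsto_inner_sub_of_weak hX w p)).div_atTop hβ
  refine squeeze_zero' (Eventually.of_forall hB) ?_ hbound
  filter_upwards [hβ.eventually_gt_atTop 0] with i hβi
  obtain ⟨v, hv, hv0⟩ := hzero i
  rw [le_div_iff₀' hβi, ← real_inner_smul_left]
  exact hT.inner_le_of_add_smul_add_eq_zero (hε i) hv hv0 hw

lemma MonoSV.inner_sub_nonpos_of_tendsto_zeros [l.NeBot] (hT : MonoSV T) {u w : H} (hw : w ∈ T u)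
    (hB : ∀ i, 0 ≤ ⟪B (X i), X i - u⟫) (hε : ∀ i, 0 ≤ ε i) (hε0 : Tendsto ε l (𝓝 0))
    (hβ : Tendsto β l atTop) (hzero : ∀ i, ∃ v ∈ T (X i), v + ε i • X i + β i • B (X i) = 0)
    (hX : ∀ y, Tendsto (fun i => ⟪X i, y⟫) l (𝓝 ⟪x, y⟫)) : ⟪w, x - u⟫ ≤ 0 := by
  have hε0' : Tendsto (fun i => ε i * (‖u‖ ^ 2 / 4)) l (𝓝 0) := by
    simpa using hε0.mul_const (‖u‖ ^ 2 / 4)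
  refine le_of_tendsto_of_tendsto (tendsto_inner_sub_of_weak hX w u) hε0' ?_
  filter_upwards [hβ.eventually_ge_atTop 0] with i hβi
  obtain ⟨v, hv, hv0⟩ := hzero i
  have hle := hT.inner_le_of_add_smul_add_eq_zero (hε i) hv hv0 hw
  rw [real_inner_smul_left] at hle
  linarith [mul_nonneg hβi (hB i)]

end Penalization

theorem weak_cluster_points_solve_general {ι : Type*} {l : Filter ι} [l.NeBot]
    {A : H → Set H} {D B : H → H} {K : ℝ≥0} {μ : ℝ} (hμ : 0 < μ) (hA : MonoSV A)
    (hDmono : ∀ x y, 0 ≤ ⟪D x - D y, x - y⟫) (hDlip : LipschitzWith K D)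
    (hB : ∀ x y, μ * ‖B x - B y‖ ^ 2 ≤ ⟪B x - B y, x - y⟫)
    (hANC : MaxMonoSV fun x => {w | ∃ a ∈ A x, ∃ ξ ∈ nCone {z | B z = 0} x, w = a + ξ})
    {ε β : ι → ℝ} (hε : ∀ i, 0 ≤ ε i) (hε0 : Tendsto ε l (𝓝 0)) (hβ : Tendsto β l atTop)
    {X : ι → H} (hzero : ∀ i, ∃ a ∈ A (X i), a + D (X i) + ε i • X i + β i • B (X i) = 0)
    {x : H} (hX : ∀ y, Tendsto (fun i => ⟪X i, y⟫) l (𝓝 ⟪x, y⟫)) :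
    0 ∈ PhiOp A D {z | B z = 0} x := by
  have hAD := hA.add_map hDmono
  have hPhi := maxMonoSV_phiOp hANC hDmono hDlip
  have hzero' (i) : ∃ v ∈ {w | ∃ a ∈ A (X i), w = a + D (X i)},
      v + ε i • X i + β i • B (X i) = 0 :=
    let ⟨a, ha, ha0⟩ := hzero i
    ⟨_, ⟨a, ha, rfl⟩, ha0⟩
  have hBX {u} (hu : B u = 0) (i) := inner_map_sub_nonneg_of_cocoercive hμ.le hB hu (X i)
  have hxC : B x = 0 := by
    obtain ⟨p, _, a, ha, _, ⟨hp, -⟩, -⟩ := hPhi.exists_mem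
    exact map_eq_zero_of_tendsto_inner_of_cocoercive hμ hB hp hX
      (hAD.tendsto_inner_map_sub_zero ⟨a, ha, rfl⟩ (hBX hp) hε hε0 hβ hzero' hX)
  refine hPhi.mem_iff.2 ?_
  rintro u _ ⟨a, ha, ξ, ⟨hu, hξ⟩, rfl⟩
  have hADu : ⟪a + D u, x - u⟫ ≤ 0 :=
    hAD.inner_sub_nonpos_of_tendsto_zeros ⟨a, ha, rfl⟩ (hBX hu) hε hε0 hβ hzero' hX
  rw [zero_sub, inner_neg_left, inner_add_left]
  linarith [hξ x hxC]

theorem weak_cluster_points_solve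
    (A : H → Set H) (D B : H → H) (η μ : ℝ) (hη : 0 < η) (hμ : 0 < μ)
    (hAmax : MaxMonoSV A)
    (hDmono : ∀ x y : H, (0:ℝ) ≤ ⟪D x - D y, x - y⟫)
    (hDlip : ∀ x y : H, ‖D x - D y‖ ≤ (1/η) * ‖x - y‖)
    (hBcoco : ∀ x y : H, μ * ‖B x - B y‖^2 ≤ ⟪B x - B y, x - y⟫)
    (hBcoer : ∀ M : ℝ, ∃ R : ℝ, ∀ x : H, R ≤ ‖x‖ → M ≤ ⟪x, B x⟫ / ‖x‖)
    (hCne : {x : H | B x = 0}.Nonempty)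
    (hANCmax : MaxMonoSV (fun x : H =>
      {w : H | ∃ a ∈ A x, ∃ ξ ∈ nCone {z : H | B z = 0} x, w = a + ξ}))
    (hADBmax : ∀ β : ℝ, 0 < β →
      MaxMonoSV (fun x : H => {w : H | ∃ a ∈ A x, w = a + D x + β • B x}))
    (hzer : ∃ x : H, (0:H) ∈ PhiOp A D {z : H | B z = 0} x)
    (xbar : ℝ → ℝ → H)
    (hxbar : ∀ ε β : ℝ, 0 < ε → 0 < β →
      (∃ a ∈ A (xbar ε β), a + D (xbar ε β) + ε • xbar ε β + β • B (xbar ε β) = 0) ∧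
      (∀ z : H, (∃ a ∈ A z, a + D z + ε • z + β • B z = 0) → z = xbar ε β))
    (εs βs : ℕ → ℝ) (hεpos : ∀ n, 0 < εs n) (hβpos : ∀ n, 0 < βs n)
    (hε0 : Tendsto εs atTop (nhds 0)) (hβinf : Tendsto βs atTop atTop)
    (hεβ : Tendsto (fun n => εs n * βs n) atTop atTop) :
    ∀ xinf : H,
    (∃ φ : ℕ → ℕ, StrictMono φ ∧
      ∀ y : H, Tendsto (fun k => ⟪xbar (εs (φ k)) (βs (φ k)), y⟫) atTop
        (nhds ⟪xinf, y⟫)) →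
    (0:H) ∈ PhiOp A D {z : H | B z = 0} xinf := by
  rintro xinf ⟨φ, hφ, hX⟩
  exact weak_cluster_points_solve_general hμ hAmax.1 hDmono
    (.of_dist_le' (by simpa only [dist_eq_norm] using hDlip)) hBcoco hANCmax
    (fun k => (hεpos (φ k)).le) (hε0.comp hφ.tendsto_atTop) (hβinf.comp hφ.tendsto_atTop)
    (fun k => (hxbar _ _ (hεpos (φ k)) (hβpos (φ k))).1) hX
end

section
/- Let H be a real Hilbert space, A : H → Set H monotone, D : H → H monotone, B : H → H monotone, and fix β > 0. Let ε₁, ε₂ > 0 and suppose z₁, z₂ ∈ H satisfy 0 ∈ A z_i + D z_i + ε_i z_i + β B z_i for i = 1, 2. Then ‖z₁ − z₂‖ ≤ (|ε₂ − ε₁| / min(ε₁, ε₂)) · max(‖z₁‖, ‖z₂‖). -/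
open scoped RealInnerProductSpace

/-!
The operator `M = A + D + β B` is monotone, and the inclusions say `-ε₁ z₁ ∈ M z₁` and
`-ε₂ z₂ ∈ M z₂`. Monotonicity of `M` on this pair and `ε₁ z₁ - ε₂ z₂ = ε₁ (z₁ - z₂) - (ε₂ - ε₁) z₂`
give `ε₁ ‖z₁ - z₂‖² ≤ (ε₂ - ε₁) ⟪z₂, z₁ - z₂⟫`, so `ε₁ ‖z₁ - z₂‖ ≤ |ε₂ - ε₁| ‖z₂‖` by
Cauchy–Schwarz. Exchanging the two solutions gives the same bound for `ε₂ ‖z₁ - z₂‖`, hence the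
estimate even with `max ε₁ ε₂` in the denominator.
-/

section MonotoneOperator

open scoped Pointwise

theorem neg_smul_mem_add_add_smul {R E : Type*} [AddCommGroup E] [SMul R E]
    {A D B : E → Set E} {β ε : R} {z a d b : E} (ha : a ∈ A z) (hd : d ∈ D z) (hb : b ∈ B z)
    (hz : a + d + ε • z + β • b = 0) : -(ε • z) ∈ (A + D + β • B) z := by
  have sum_eq : a + d + β • b = -(ε • z) := by
    rw [eq_neg_iff_add_eq_zero, add_right_comm, hz]
  rw [← sum_eq]
  exact Set.add_mem_add (Set.add_mem_add ha hd) (Set.smul_mem_smul_set hb)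

variable {H : Type*} [SeminormedAddCommGroup H] [InnerProductSpace ℝ H]

/-- Monotonicity of a set-valued operator on a real inner product space. Operators are encoded as
functions into `Set H`, so that sums and multiples of operators are the pointwise ones and a
single-valued map `f` is the operator `fun x ↦ {f x}`. -/
def IsMonotoneOperator (M : H → Set H) : Prop :=
  ∀ ⦃x y u v : H⦄, u ∈ M x → v ∈ M y → (0 : ℝ) ≤ ⟪u - v, x - y⟫

namespace IsMonotoneOperator

theorem singleton {f : H → H} (hf : ∀ x y : H, (0 : ℝ) ≤ ⟪f x - f y, x - y⟫) :
    IsMonotoneOperator fun x ↦ {f x} := by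
  rintro x y _ _ rfl rfl
  exact hf x y

theorem add {M N : H → Set H} (hM : IsMonotoneOperator M) (hN : IsMonotoneOperator N) :
    IsMonotoneOperator (M + N) := by
  rintro x y _ _ ⟨u, hu, u', hu', rfl⟩ ⟨v, hv, v', hv', rfl⟩
  simp only [add_sub_add_comm, inner_add_left]
  exact add_nonneg (hM hu hv) (hN hu' hv')

theorem smul {M : H → Set H} (hM : IsMonotoneOperator M) {c : ℝ} (hc : 0 ≤ c) :
    IsMonotoneOperator (c • M) := by
  rintro x y _ _ ⟨u, hu, rfl⟩ ⟨v, hv, rfl⟩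
  simp only [← smul_sub, real_inner_smul_left]
  exact mul_nonneg hc (hM hu hv)

variable {M : H → Set H} {ε₁ ε₂ : ℝ} {z₁ z₂ : H}

theorem mul_norm_sub_sq_le_mul_inner (hM : IsMonotoneOperator M)
    (h₁ : -(ε₁ • z₁) ∈ M z₁) (h₂ : -(ε₂ • z₂) ∈ M z₂) :
    ε₁ * ‖z₁ - z₂‖ ^ 2 ≤ (ε₂ - ε₁) * ⟪z₂, z₁ - z₂⟫ := by
  have decomposition :
      -(ε₁ • z₁) - -(ε₂ • z₂) = (ε₂ - ε₁) • z₂ - ε₁ • (z₁ - z₂) := by module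
  have nonneg := hM h₁ h₂
  rwa [decomposition, inner_sub_left, real_inner_smul_left, real_inner_smul_left,
    real_inner_self_eq_norm_sq, sub_nonneg] at nonneg

theorem mul_norm_sub_le (hM : IsMonotoneOperator M)
    (h₁ : -(ε₁ • z₁) ∈ M z₁) (h₂ : -(ε₂ • z₂) ∈ M z₂) :
    ε₁ * ‖z₁ - z₂‖ ≤ |ε₂ - ε₁| * ‖z₂‖ := by
  rcases (norm_nonneg (z₁ - z₂)).eq_or_lt with norm_eq | norm_pos
  · rw [← norm_eq, mul_zero]
    positivity
  · refine le_of_mul_le_mul_right ?_ norm_pos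
    calc ε₁ * ‖z₁ - z₂‖ * ‖z₁ - z₂‖
        = ε₁ * ‖z₁ - z₂‖ ^ 2 := by ring
      _ ≤ (ε₂ - ε₁) * ⟪z₂, z₁ - z₂⟫ := hM.mul_norm_sub_sq_le_mul_inner h₁ h₂
      _ ≤ |ε₂ - ε₁| * |⟪z₂, z₁ - z₂⟫| := by rw [← abs_mul]; exact le_abs_self _
      _ ≤ |ε₂ - ε₁| * (‖z₂‖ * ‖z₁ - z₂‖) := by gcongr; exact abs_real_inner_le_norm _ _
      _ = |ε₂ - ε₁| * ‖z₂‖ * ‖z₁ - z₂‖ := by ring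

end IsMonotoneOperator

theorem solution_map_lipschitz_in_epsilon_general {M : H → Set H} (hM : IsMonotoneOperator M)
    {ε₁ ε₂ : ℝ} (hε : 0 < max ε₁ ε₂) {z₁ z₂ : H}
    (h₁ : -(ε₁ • z₁) ∈ M z₁) (h₂ : -(ε₂ • z₂) ∈ M z₂) :
    ‖z₁ - z₂‖ ≤ |ε₂ - ε₁| / max ε₁ ε₂ * max ‖z₁‖ ‖z₂‖ := by
  rw [div_mul_eq_mul_div, le_div_iff₀' hε, max_mul_of_nonneg _ _ (norm_nonneg _)]
  refine max_le ?_ ?_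
  · calc ε₁ * ‖z₁ - z₂‖ ≤ |ε₂ - ε₁| * ‖z₂‖ := hM.mul_norm_sub_le h₁ h₂
      _ ≤ |ε₂ - ε₁| * max ‖z₁‖ ‖z₂‖ := by gcongr; exact le_max_right _ _
  · calc ε₂ * ‖z₁ - z₂‖ = ε₂ * ‖z₂ - z₁‖ := by rw [norm_sub_rev]
      _ ≤ |ε₁ - ε₂| * ‖z₁‖ := hM.mul_norm_sub_le h₂ h₁
      _ = |ε₂ - ε₁| * ‖z₁‖ := by rw [abs_sub_comm]
      _ ≤ |ε₂ - ε₁| * max ‖z₁‖ ‖z₂‖ := by gcongr; exact le_max_left _ _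

end MonotoneOperator

/-- Lipschitz dependence of the regularized solutions on the Tikhonov
parameter `ε`, for fixed penalty parameter `β`. -/
theorem solution_map_lipschitz_in_epsilon
    {H : Type*} [NormedAddCommGroup H] [InnerProductSpace ℝ H]
    (A : H → Set H) (D B : H → H)
    (hAmono : ∀ ⦃x y u v : H⦄, u ∈ A x → v ∈ A y → (0:ℝ) ≤ ⟪u - v, x - y⟫)
    (hDmono : ∀ x y : H, (0:ℝ) ≤ ⟪D x - D y, x - y⟫)
    (hBmono : ∀ x y : H, (0:ℝ) ≤ ⟪B x - B y, x - y⟫)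
    (β : ℝ) (hβ : 0 < β) (ε₁ ε₂ : ℝ) (hε₁ : 0 < ε₁) (hε₂ : 0 < ε₂)
    (z₁ z₂ a₁ a₂ : H)
    (ha₁ : a₁ ∈ A z₁) (hz₁ : a₁ + D z₁ + ε₁ • z₁ + β • B z₁ = 0)
    (ha₂ : a₂ ∈ A z₂) (hz₂ : a₂ + D z₂ + ε₂ • z₂ + β • B z₂ = 0) :
    ‖z₁ - z₂‖ ≤ (|ε₂ - ε₁| / min ε₁ ε₂) * max ‖z₁‖ ‖z₂‖ := by
  have hM := (IsMonotoneOperator.add hAmono (.singleton hDmono)).add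
    ((IsMonotoneOperator.singleton hBmono).smul hβ.le)
  calc ‖z₁ - z₂‖ ≤ |ε₂ - ε₁| / max ε₁ ε₂ * max ‖z₁‖ ‖z₂‖ :=
        solution_map_lipschitz_in_epsilon_general hM (lt_max_of_lt_left hε₁)
          (neg_smul_mem_add_add_smul ha₁ rfl rfl hz₁)
          (neg_smul_mem_add_add_smul ha₂ rfl rfl hz₂)
    _ ≤ |ε₂ - ε₁| / min ε₁ ε₂ * max ‖z₁‖ ‖z₂‖ := by gcongr; exact min_le_max
end

section
/- Under the standing data, let ε, β : [0,∞) → (0,∞) be absolutely continuous with ε nonincreasing and ε(t) → 0, β nondecreasing and β(t) → ∞, and ε(t)β(t) → ∞ as t → ∞. Let x̄(t) := x̄(ε(t), β(t)) denote the central path. Then the curve t ↦ x̄(t) is differentiable at almost every t ≥ 0, and its derivative satisfies ‖(d/dt) x̄(t)‖ ≤ (β'(t)/ε(t)) ‖B(x̄(t))‖ + (|ε'(t)|/ε(t)) ‖x̄(t)‖ for almost every t ≥ 0. -/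
open Filter Topology MeasureTheory
open scoped RealInnerProductSpace

variable {H : Type*} [NormedAddCommGroup H] [InnerProductSpace ℝ H] [CompleteSpace H]

/-- `f` is (locally) absolutely continuous on `[0,∞)` with integrand (a.e. derivative) `g`. -/
def ACRep (f g : ℝ → ℝ) : Prop :=
  (∀ b : ℝ, 0 ≤ b → IntervalIntegrable g MeasureTheory.volume 0 b) ∧
  ∀ t : ℝ, 0 ≤ t → f t = f 0 + ∫ s in (0:ℝ)..t, g s

/-!
Testing the monotonicity of `A` and `B` on the zeros `x₁`, `x₂` for the parameters `(ε₁, β₁)`,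
`(ε₂, β₂)` gives `ε₂ ‖x₁ - x₂‖ ≤ |β₁ - β₂| ‖B x₁‖ + |ε₁ - ε₂| ‖x₁‖`. On a compact time interval the
path is therefore dominated by a multiple of the total variations of `ε` and `β`, and becomes
Lipschitz after a change of time. A Lipschitz curve in a Hilbert space is differentiable almost
everywhere: it is the primitive of a weak `L²` limit of its difference quotients, so the Lebesgue
differentiation theorem applies. Dividing the estimate by `|s - t|` bounds the derivative.
-/

section HilbertCurves

open Set

variable {E : Type*} [NormedAddCommGroup E] [InnerProductSpace ℝ E] [CompleteSpace E]

lemma exists_tendsto_inner_of_norm_le {𝕜 F ι : Type*} [RCLike 𝕜] [NormedAddCommGroup F]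
    [InnerProductSpace 𝕜 F] [CompleteSpace F] (l : Ultrafilter ι) {u : ι → F} {C : ℝ}
    (hu : ∀ i, ‖u i‖ ≤ C) :
    ∃ v, ∀ w, Tendsto (fun i => inner 𝕜 (u i) w) l (𝓝 (inner 𝕜 v w)) := by
  obtain ⟨φ, -, hφ⟩ := (WeakDual.isCompact_closedBall (0 : StrongDual 𝕜 F) C).ultrafilter_le_nhds
    (l.map fun i => StrongDual.toWeakDual (InnerProductSpace.toDual 𝕜 F (u i)))
    (le_principal_iff.2 <| mem_map.2 <| univ_mem' fun i => by simpa using hu i)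
  refine ⟨(InnerProductSpace.toDual 𝕜 F).symm (WeakDual.toStrongDual φ), fun w => ?_⟩
  rw [InnerProductSpace.toDual_symm_apply]
  exact ((WeakDual.eval_continuous w).tendsto φ).comp hφ

lemma tendsto_intervalIntegral_slope {F : Type*} [NormedAddCommGroup F] [NormedSpace ℝ F]
    [CompleteSpace F] {f : ℝ → F} (hf : Continuous f) (a b : ℝ) :
    Tendsto (fun h => ∫ s in a..b, h⁻¹ • (f (s + h) - f s)) (𝓝[≠] 0) (𝓝 (f b - f a)) := by
  have slope_tendsto (c : ℝ) :=
    hasDerivAt_iff_tendsto_slope_zero.1 (hf.integral_hasStrictDerivAt 0 c).hasDerivAt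
  refine ((slope_tendsto b).sub (slope_tendsto a)).congr fun h => ?_
  have int (c d : ℝ) : IntervalIntegrable f volume c d := hf.intervalIntegrable c d
  have hf_shift : Continuous fun s => f (s + h) := hf.comp (continuous_add_const h)
  rw [intervalIntegral.integral_smul, ← smul_sub, sub_sub_sub_comm,
    intervalIntegral.integral_sub (hf_shift.intervalIntegrable a b) (int a b),
    intervalIntegral.integral_comp_add_right f h,
    intervalIntegral.integral_interval_sub_left (int _ _) (int _ _),
    intervalIntegral.integral_interval_sub_left (int _ _) (int _ _)]

lemma norm_slope_le_of_lipschitzWith {F : Type*} [NormedAddCommGroup F] [NormedSpace ℝ F]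
    {K : NNReal} {f : ℝ → F} (hf : LipschitzWith K f) (s h : ℝ) :
    ‖h⁻¹ • (f (s + h) - f s)‖ ≤ K := by
  rcases eq_or_ne h 0 with rfl | hh
  · simp
  · rw [norm_smul, norm_inv, inv_mul_le_iff₀ (norm_pos_iff.2 hh), mul_comm]
    simpa using hf.norm_sub_le (s + h) s

theorem exists_intervalIntegral_eq_sub_of_lipschitzWith {K : NNReal} {f : ℝ → E}
    (hf : LipschitzWith K f) {a b : ℝ} (hab : a ≤ b) :
    ∃ v : ℝ → E, IntervalIntegrable v volume a b ∧
      ∀ t ∈ Icc a b, f t - f a = ∫ s in a..t, v s := by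
  let μ := volume.restrict (Ioc a b)
  let q (h s : ℝ) : E := h⁻¹ • (f (s + h) - f s)
  have hq_cont (h : ℝ) : Continuous (q h) :=
    ((hf.continuous.comp (continuous_add_const h)).sub hf.continuous).const_smul h⁻¹
  have hq_memLp (h : ℝ) : MemLp (q h) 2 μ :=
    .of_bound (hq_cont h).aestronglyMeasurable K
      (.of_forall (norm_slope_le_of_lipschitzWith hf · h))
  have hq_norm (h : ℝ) : ‖(hq_memLp h).toLp‖ ≤ _ :=
    Lp.norm_le_of_ae_bound K.2 ((hq_memLp h).coeFn_toLp.mono fun s hs =>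
      hs ▸ norm_slope_le_of_lipschitzWith hf s h)
  let l : Ultrafilter ℝ := Ultrafilter.of (𝓝[≠] 0)
  obtain ⟨v, hv⟩ := exists_tendsto_inner_of_norm_le (𝕜 := ℝ) l hq_norm
  refine ⟨v, (intervalIntegrable_iff_integrableOn_Ioc_of_le hab).2
    ((Lp.memLp v).integrable one_le_two), fun t ht => ext_inner_left ℝ fun w => ?_⟩
  have hrestrict : μ.restrict (Ioc a t) = volume.restrict (Ioc a t) := by
    rw [Measure.restrict_restrict measurableSet_Ioc,
      inter_eq_left.2 (Ioc_subset_Ioc_right ht.2)]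
  have inner_indicator (u : Lp E 2 μ) :
      ⟪u, indicatorConstLp 2 measurableSet_Ioc (measure_ne_top μ (Ioc a t)) w⟫ =
        ⟪w, ∫ s in a..t, u s⟫ := by
    rw [real_inner_comm, L2.inner_indicatorConstLp_eq_inner_setIntegral ℝ, hrestrict,
      intervalIntegral.integral_of_le ht.1]
  have hweak := hv (indicatorConstLp 2 measurableSet_Ioc (measure_ne_top μ (Ioc a t)) w)
  simp only [inner_indicator] at hweak
  refine tendsto_nhds_unique ?_ hweak
  refine Tendsto.congr (fun h => ?_) (tendsto_const_nhds.inner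
    ((tendsto_intervalIntegral_slope hf.continuous a t).mono_left (Ultrafilter.of_le _)))
  rw [intervalIntegral.integral_of_le ht.1, intervalIntegral.integral_of_le ht.1, ← hrestrict]
  congr 1
  exact integral_congr_ae (ae_restrict_of_ae (hq_memLp h).coeFn_toLp.symm)

lemma tendsto_ae_hausdorffMeasure_of_antilipschitzWith {X Y : Type*} [MetricSpace X]
    [MetricSpace Y] [MeasurableSpace X] [BorelSpace X] [MeasurableSpace Y] [BorelSpace Y]
    {K : NNReal} {d : ℝ} (hd : 0 ≤ d) {φ : X → Y} (hφ : AntilipschitzWith K φ) :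
    Tendsto φ (ae μH[d]) (ae μH[d]) := by
  intro s hs
  rw [mem_ae_iff] at hs
  rw [mem_map, mem_ae_iff, ← preimage_compl]
  have hle := hφ.hausdorffMeasure_preimage_le hd sᶜ
  rwa [hs, mul_zero, nonpos_iff_eq_zero] at hle

theorem ae_differentiableAt_of_lipschitzWith {K : NNReal} {f : ℝ → E}
    (hf : LipschitzWith K f) : ∀ᵐ t, DifferentiableAt ℝ f t := by
  have on_Ioo (n : ℕ) : ∀ᵐ t, t ∈ Ioo (-n : ℝ) n → DifferentiableAt ℝ f t := by
    have hn : (-n : ℝ) ≤ n := neg_le_self n.cast_nonneg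
    obtain ⟨v, hv_int, hv⟩ := exists_intervalIntegral_eq_sub_of_lipschitzWith hf hn
    filter_upwards [hv_int.ae_hasDerivAt_integral] with t hderiv ht
    rw [uIcc_of_le hn] at hderiv
    have hderiv_t := hderiv (Ioo_subset_Icc_self ht) (-n) (left_mem_Icc.2 hn)
    refine ((hderiv_t.const_add (f (-n))).congr_of_eventuallyEq ?_).differentiableAt
    filter_upwards [Icc_mem_nhds ht.1 ht.2] with s hs
    rw [← hv s hs, add_sub_cancel]
  filter_upwards [ae_all_iff.2 on_Ioo] with t ht
  obtain ⟨n, hn⟩ := exists_nat_gt |t|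
  exact ht n (abs_lt.1 hn)

lemma dist_le_dist_of_dist_le_sub {α X : Type*} [LinearOrder α] [PseudoMetricSpace X]
    {f : α → X} {G : α → ℝ} (h : ∀ s t, s ≤ t → dist (f s) (f t) ≤ G t - G s) (s t : α) :
    dist (f s) (f t) ≤ dist (G s) (G t) := by
  rw [Real.dist_eq]
  rcases le_total s t with hst | hts
  · exact (h s t hst).trans (by rw [abs_sub_comm]; exact le_abs_self _)
  · exact (dist_comm (f s) (f t) ▸ h t s hts).trans (le_abs_self _)

theorem ae_differentiableAt_of_dist_le_sub {f : ℝ → E} {G : ℝ → ℝ} (hG : Continuous G)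
    (h : ∀ s t, s ≤ t → dist (f s) (f t) ≤ G t - G s) : ∀ᵐ t, DifferentiableAt ℝ f t := by
  -- `φ` does not contract distances, so `f ∘ φ⁻¹` is Lipschitz and `φ⁻¹` preserves null sets.
  let φ (t : ℝ) : ℝ := t + G t
  have hG_mono : Monotone G := fun s t hst => sub_nonneg.1 (dist_nonneg.trans (h s t hst))
  have hφ_mono : Monotone φ := monotone_id.add hG_mono
  have hφ_anti : AntilipschitzWith 1 φ := .of_le_mul_dist fun s t => by
    rw [NNReal.coe_one, one_mul]
    refine dist_le_dist_of_dist_le_sub (f := id) (fun s t hst => ?_) s t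
    rw [id, id, Real.dist_eq, abs_sub_comm, abs_of_nonneg (sub_nonneg.2 hst)]
    linarith [hG_mono hst]
  have hφ_surj : Function.Surjective φ := by
    refine (continuous_id.add hG).surjective ?_ ?_
    · refine tendsto_atTop_add_right_of_le' _ (G 0) tendsto_id ?_
      filter_upwards [eventually_ge_atTop 0] with t ht using hG_mono ht
    · refine tendsto_atBot_add_right_of_ge' _ (G 0) tendsto_id ?_
      filter_upwards [eventually_le_atBot 0] with t ht using hG_mono ht
  obtain ⟨ψ, hψ⟩ := hφ_surj.hasRightInverse
  have hf_eq : f = (f ∘ ψ) ∘ φ := by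
    funext t
    simp [hψ.leftInverse_of_injective hφ_anti.injective t]
  have hlip : LipschitzWith 1 (f ∘ ψ) := .of_dist_le_mul fun p q => by
    have hf_dist := dist_le_dist_of_dist_le_sub (f := f) (G := φ)
      (fun s t hst => (h s t hst).trans (by simp only [φ]; linarith)) (ψ p) (ψ q)
    simpa [hψ p, hψ q] using hf_dist
  have hφ_ae : Tendsto φ (ae volume) (ae volume) := by
    simpa only [hausdorffMeasure_real] using
      tendsto_ae_hausdorffMeasure_of_antilipschitzWith zero_le_one hφ_anti
  filter_upwards [hφ_ae.eventually (ae_differentiableAt_of_lipschitzWith hlip),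
    hφ_mono.ae_differentiableAt] with t hfψ hφ
  rw [hf_eq]
  exact hfψ.comp t hφ

theorem ae_differentiableAt_of_dist_le_sub_on_Icc {f : ℝ → E} {G : ℝ → ℝ} {a b : ℝ}
    (hG : ContinuousOn G (Icc a b))
    (h : ∀ s ∈ Icc a b, ∀ t ∈ Icc a b, s ≤ t → dist (f s) (f t) ≤ G t - G s) :
    ∀ᵐ t, t ∈ Ioo a b → DifferentiableAt ℝ f t := by
  rcases lt_or_ge b a with hba | hab
  · simp [Ioo_eq_empty_of_le hba.le]
  let r (t : ℝ) : ℝ := projIcc a b hab t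
  have hr_mem (t : ℝ) : r t ∈ Icc a b := (projIcc a b hab t).2
  have hr_cont : Continuous r := continuous_subtype_val.comp continuous_projIcc
  have hfr_dist (s t : ℝ) (hst : s ≤ t) : dist (f (r s)) (f (r t)) ≤ G (r t) - G (r s) :=
    h _ (hr_mem s) _ (hr_mem t) (monotone_projIcc hab hst)
  filter_upwards [ae_differentiableAt_of_dist_le_sub (hG.comp_continuous hr_cont hr_mem) hfr_dist]
    with t hfr ht
  refine hfr.congr_of_eventuallyEq ?_
  filter_upwards [Icc_mem_nhds ht.1 ht.2] with s hs
  simp [r, projIcc_of_mem hab hs]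

end HilbertCurves

section AbsolutelyContinuous

open Set

lemma ae_restrict_Ici_of_forall_Ioo {a : ℝ} {p : ℝ → Prop}
    (h : ∀ b, a ≤ b → ∀ᵐ t, t ∈ Ioo a b → p t) : ∀ᵐ t ∂volume.restrict (Ici a), p t := by
  rw [← restrict_Ioi_eq_restrict_Ici, ae_restrict_iff' measurableSet_Ioi]
  filter_upwards [ae_all_iff.2 fun n : ℕ => h (a + n) (le_add_of_nonneg_right n.cast_nonneg)]
    with t ht hat
  obtain ⟨n, hn⟩ := exists_nat_gt (t - a)
  exact ht n ⟨hat, by linarith⟩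

lemma acRep_integral {g : ℝ → ℝ} (hg : ∀ b : ℝ, 0 ≤ b → IntervalIntegrable g volume 0 b) :
    ACRep (fun t => ∫ s in (0 : ℝ)..t, g s) g :=
  ⟨hg, by simp⟩

namespace ACRep

variable {f g : ℝ → ℝ} {s t : ℝ}

lemma sub_eq_integral (h : ACRep f g) (hs : 0 ≤ s) (ht : 0 ≤ t) :
    f t - f s = ∫ u in s..t, g u := by
  rw [h.2 t ht, h.2 s hs, add_sub_add_left_eq_sub,
    intervalIntegral.integral_interval_sub_left (h.1 t ht) (h.1 s hs)]

lemma abs_sub_le (h : ACRep f g) (hs : 0 ≤ s) (hst : s ≤ t) :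
    |f s - f t| ≤ (∫ u in (0 : ℝ)..t, |g u|) - ∫ u in (0 : ℝ)..s, |g u| := by
  have ht := hs.trans hst
  rw [abs_sub_comm, h.sub_eq_integral hs ht,
    intervalIntegral.integral_interval_sub_left (h.1 t ht).abs (h.1 s hs).abs]
  exact intervalIntegral.abs_integral_le_integral_abs hst

lemma continuousOn_Icc (h : ACRep f g) (b : ℝ) : ContinuousOn f (Icc 0 b) := by
  rcases lt_or_ge b 0 with hb | hb
  · simp [hb]
  have hprim := intervalIntegral.continuousOn_primitive_interval' (h.1 b hb) left_mem_uIcc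
  rw [uIcc_of_le hb] at hprim
  exact (hprim.const_add (f 0)).congr fun t ht => h.2 t ht.1

lemma ae_hasDerivAt (h : ACRep f g) :
    ∀ᵐ t ∂volume.restrict (Ici (0 : ℝ)), HasDerivAt f (g t) t := by
  refine ae_restrict_Ici_of_forall_Ioo fun b hb => ?_
  filter_upwards [(h.1 b hb).ae_hasDerivAt_integral] with t hderiv ht
  rw [uIcc_of_le hb] at hderiv
  refine ((hderiv (Ioo_subset_Icc_self ht) 0 (left_mem_Icc.2 hb)).const_add
    (f 0)).congr_of_eventuallyEq ?_
  filter_upwards [Ici_mem_nhds ht.1] with s hs using h.2 s hs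

lemma ae_nonneg_of_monotoneOn (h : ACRep f g) (hf : MonotoneOn f (Ici 0)) :
    ∀ᵐ t ∂volume.restrict (Ici (0 : ℝ)), 0 ≤ g t := by
  filter_upwards [h.ae_hasDerivAt, ae_restrict_mem measurableSet_Ici] with t hderiv ht
  refine hderiv.hasDerivWithinAt.nonneg_of_monotoneOn ?_ hf
  exact uniqueDiffWithinAt_iff_accPt.1 (uniqueDiffOn_Ici 0 t ht)

end ACRep

end AbsolutelyContinuous

section PenalizedZeros

open Set

variable {E : Type*} [NormedAddCommGroup E] [InnerProductSpace ℝ E] {A : E → Set E} {B : E → E}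

/-- `z` is a zero of the penalized operator `A + ε • Id + β • B`; the inclusion is solved for the
element of `A z`. The operator `D` of the main theorem is absorbed into the set-valued `A`. -/
def IsPenalizedZero (A : E → Set E) (B : E → E) (ε β : ℝ) (z : E) : Prop :=
  -(ε • z + β • B z) ∈ A z

lemma isPenalizedZero_image_add_iff {D : E → E} {ε β : ℝ} {z : E} :
    IsPenalizedZero (fun x => (· + D x) '' A x) B ε β z ↔
      ∃ a ∈ A z, a + D z + ε • z + β • B z = 0 := by
  simp only [IsPenalizedZero, mem_image, add_assoc, eq_neg_iff_add_eq_zero]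

lemma MonoSV.image_add {D : E → E} (hA : MonoSV A) (hD : ∀ x y, 0 ≤ ⟪D x - D y, x - y⟫) :
    MonoSV fun x => (· + D x) '' A x := by
  rintro x y _ _ ⟨a, ha, rfl⟩ ⟨b, hb, rfl⟩
  rw [add_sub_add_comm, inner_add_left]
  exact add_nonneg (hA ha hb) (hD x y)

lemma mul_norm_sub_le_of_isPenalizedZero (hA : MonoSV A) (hB : ∀ x y, 0 ≤ ⟪B x - B y, x - y⟫)
    {x y : E} {ε₁ ε₂ β₁ β₂ : ℝ} (hβ₂ : 0 ≤ β₂)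
    (hx : IsPenalizedZero A B ε₁ β₁ x) (hy : IsPenalizedZero A B ε₂ β₂ y) :
    ε₂ * ‖x - y‖ ≤ |β₁ - β₂| * ‖B x‖ + |ε₁ - ε₂| * ‖x‖ := by
  have hmono : 0 ≤ ⟪-(ε₁ • x + β₁ • B x) - -(ε₂ • y + β₂ • B y) + β₂ • (B x - B y), x - y⟫ := by
    rw [inner_add_left, real_inner_smul_left]
    exact add_nonneg (hA hx hy) (mul_nonneg hβ₂ (hB x y))
  have hsplit : -(ε₁ • x + β₁ • B x) - -(ε₂ • y + β₂ • B y) + β₂ • (B x - B y) =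
      -((β₁ - β₂) • B x + (ε₁ - ε₂) • x) - ε₂ • (x - y) := by module
  rw [hsplit, inner_sub_left, real_inner_smul_left, real_inner_self_eq_norm_sq] at hmono
  have hcs : ε₂ * ‖x - y‖ * ‖x - y‖ ≤ (|β₁ - β₂| * ‖B x‖ + |ε₁ - ε₂| * ‖x‖) * ‖x - y‖ :=
    calc ε₂ * ‖x - y‖ * ‖x - y‖
        ≤ ⟪-((β₁ - β₂) • B x + (ε₁ - ε₂) • x), x - y⟫ := by linarith
      _ ≤ ‖(β₁ - β₂) • B x + (ε₁ - ε₂) • x‖ * ‖x - y‖ := by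
          simpa only [norm_neg] using
            real_inner_le_norm (-((β₁ - β₂) • B x + (ε₁ - ε₂) • x)) (x - y)
      _ ≤ (|β₁ - β₂| * ‖B x‖ + |ε₁ - ε₂| * ‖x‖) * ‖x - y‖ := by
          gcongr
          exact (norm_add_le _ _).trans_eq (by simp only [norm_smul, Real.norm_eq_abs])
  rcases (norm_nonneg (x - y)).eq_or_lt with hxy | hxy
  · rw [← hxy, mul_zero]
    positivity
  · exact le_of_mul_le_mul_right hcs hxy

lemma lipschitzWith_of_cocoercive {μ : ℝ} (hμ : 0 < μ)
    (hB : ∀ x y, μ * ‖B x - B y‖ ^ 2 ≤ ⟪B x - B y, x - y⟫) : LipschitzWith μ⁻¹.toNNReal B := by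
  refine .of_dist_le_mul fun x y => ?_
  rw [dist_eq_norm, dist_eq_norm, Real.coe_toNNReal _ (inv_nonneg.2 hμ.le), le_inv_mul_iff₀ hμ]
  rcases (norm_nonneg (B x - B y)).eq_or_lt with hBxy | hBxy
  · simp [← hBxy]
  · refine le_of_mul_le_mul_right ?_ hBxy
    linarith [hB x y, real_inner_le_norm (B x - B y) (x - y)]

lemma continuousOn_of_isPenalizedZero {T : Type*} [TopologicalSpace T] {S : Set T}
    {x : T → E} {ε β : T → ℝ} (hA : MonoSV A)
    (hB : ∀ x y, 0 ≤ ⟪B x - B y, x - y⟫) (hε : ∀ t ∈ S, 0 < ε t) (hβ : ∀ t ∈ S, 0 ≤ β t)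
    (hε_cont : ContinuousOn ε S) (hβ_cont : ContinuousOn β S)
    (hx : ∀ t ∈ S, IsPenalizedZero A B (ε t) (β t) (x t)) : ContinuousOn x S := by
  intro t ht
  -- The estimate involves `B` only at the fixed point `x t`.
  have hε_at := hε_cont t ht
  have hβ_at := hβ_cont t ht
  have hbound : ContinuousWithinAt
      (fun s => (|β t - β s| * ‖B (x t)‖ + |ε t - ε s| * ‖x t‖) / ε s) S t :=
    ContinuousWithinAt.div (by fun_prop) hε_at (hε t ht).ne'
  simp only [ContinuousWithinAt, sub_self, abs_zero, zero_mul, add_zero, zero_div] at hbound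
  refine tendsto_iff_norm_sub_tendsto_zero.2
    (squeeze_zero' (.of_forall fun s => norm_nonneg _) ?_ hbound)
  filter_upwards [self_mem_nhdsWithin] with s hs
  rw [norm_sub_rev, le_div_iff₀' (hε s hs)]
  exact mul_norm_sub_le_of_isPenalizedZero hA hB (hβ s hs) (hx t ht) (hx s hs)

lemma exists_norm_sub_le_of_isPenalizedZero {T : Type*} [TopologicalSpace T] {S : Set T}
    {x : T → E} {ε β : T → ℝ} (hS : IsCompact S) (hA : MonoSV A)
    (hB : ∀ x y, 0 ≤ ⟪B x - B y, x - y⟫) (hB_cont : Continuous B)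
    (hε : ∀ t ∈ S, 0 < ε t) (hβ : ∀ t ∈ S, 0 ≤ β t)
    (hε_cont : ContinuousOn ε S) (hβ_cont : ContinuousOn β S)
    (hx : ∀ t ∈ S, IsPenalizedZero A B (ε t) (β t) (x t)) :
    ∃ K, 0 ≤ K ∧ ∀ s ∈ S, ∀ t ∈ S, ‖x s - x t‖ ≤ K * (|β s - β t| + |ε s - ε t|) := by
  have hx_cont := continuousOn_of_isPenalizedZero hA hB hε hβ hε_cont hβ_cont hx
  obtain ⟨C, hC⟩ := hS.exists_bound_of_continuousOn
    ((hB_cont.comp_continuousOn hx_cont).prodMk hx_cont)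
  obtain ⟨M, hM⟩ := hS.exists_bound_of_continuousOn (hε_cont.inv₀ fun t ht => (hε t ht).ne')
  refine ⟨|M * C|, abs_nonneg _, fun s hs t ht => ?_⟩
  have hBx : ‖B (x s)‖ ≤ C := (norm_fst_le _).trans (hC s hs)
  have hxC : ‖x s‖ ≤ C := (norm_snd_le _).trans (hC s hs)
  calc ‖x s - x t‖
      ≤ (ε t)⁻¹ * (|β s - β t| * ‖B (x s)‖ + |ε s - ε t| * ‖x s‖) := by
        rw [le_inv_mul_iff₀ (hε t ht)]
        exact mul_norm_sub_le_of_isPenalizedZero hA hB (hβ t ht) (hx s hs) (hx t ht)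
    _ ≤ M * (|β s - β t| * C + |ε s - ε t| * C) := by
        gcongr
        · exact (norm_nonneg _).trans (hM t ht)
        · exact (le_abs_self _).trans (hM t ht)
    _ = M * C * (|β s - β t| + |ε s - ε t|) := by ring
    _ ≤ |M * C| * (|β s - β t| + |ε s - ε t|) := by
        gcongr
        exact le_abs_self _

variable {x : ℝ → E} {ε β ε' β' : ℝ → ℝ}

lemma ae_differentiableAt_of_isPenalizedZero [CompleteSpace E] (hA : MonoSV A)
    (hB : ∀ x y, 0 ≤ ⟪B x - B y, x - y⟫) (hB_cont : Continuous B)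
    (hε : ∀ t, 0 ≤ t → 0 < ε t) (hβ : ∀ t, 0 ≤ t → 0 ≤ β t)
    (hεAC : ACRep ε ε') (hβAC : ACRep β β')
    (hx : ∀ t, 0 ≤ t → IsPenalizedZero A B (ε t) (β t) (x t)) :
    ∀ᵐ t ∂volume.restrict (Ici (0 : ℝ)), DifferentiableAt ℝ x t := by
  refine ae_restrict_Ici_of_forall_Ioo fun b _ => ?_
  obtain ⟨K, hK_nonneg, hK⟩ := exists_norm_sub_le_of_isPenalizedZero isCompact_Icc hA hB hB_cont
    (fun t ht => hε t ht.1) (fun t ht => hβ t ht.1) (hεAC.continuousOn_Icc b)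
    (hβAC.continuousOn_Icc b) fun t ht => hx t ht.1
  let Vε (t : ℝ) : ℝ := ∫ s in (0 : ℝ)..t, |ε' s|
  let Vβ (t : ℝ) : ℝ := ∫ s in (0 : ℝ)..t, |β' s|
  have hVε : ACRep Vε fun s => |ε' s| := acRep_integral fun c hc => (hεAC.1 c hc).abs
  have hVβ : ACRep Vβ fun s => |β' s| := acRep_integral fun c hc => (hβAC.1 c hc).abs
  refine ae_differentiableAt_of_dist_le_sub_on_Icc (G := fun t => K * (Vβ t + Vε t))
    (((hVβ.continuousOn_Icc b).add (hVε.continuousOn_Icc b)).const_mul K)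
    fun s hs t ht hst => ?_
  calc dist (x s) (x t)
      ≤ K * (|β s - β t| + |ε s - ε t|) := (dist_eq_norm _ _).trans_le (hK s hs t ht)
    _ ≤ K * ((Vβ t - Vβ s) + (Vε t - Vε s)) := by
        gcongr
        · exact hβAC.abs_sub_le hs.1 hst
        · exact hεAC.abs_sub_le hs.1 hst
    _ = K * (Vβ t + Vε t) - K * (Vβ s + Vε s) := by ring

lemma norm_le_of_hasDerivAt_of_isPenalizedZero (hA : MonoSV A)
    (hB : ∀ x y, 0 ≤ ⟪B x - B y, x - y⟫) {t ε₁ β₁ : ℝ} {v : E} (hε : 0 < ε t)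
    (hβ : ∀ᶠ s in 𝓝 t, 0 ≤ β s)
    (hε' : HasDerivAt ε ε₁ t) (hβ' : HasDerivAt β β₁ t) (hv : HasDerivAt x v t)
    (hx : ∀ᶠ s in 𝓝 t, IsPenalizedZero A B (ε s) (β s) (x s)) :
    ‖v‖ ≤ |β₁| / ε t * ‖B (x t)‖ + |ε₁| / ε t * ‖x t‖ := by
  have hε_lim : Tendsto ε (𝓝[≠] t) (𝓝 (ε t)) :=
    hε'.continuousAt.tendsto.mono_left nhdsWithin_le_nhds
  rw [hasDerivAt_iff_tendsto_slope] at hε' hβ' hv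
  have hle : ε t * ‖v‖ ≤ |β₁| * ‖B (x t)‖ + |ε₁| * ‖x t‖ := by
    refine le_of_tendsto_of_tendsto (hε_lim.mul hv.norm)
      ((hβ'.abs.mul_const ‖B (x t)‖).add (hε'.abs.mul_const ‖x t‖)) ?_
    filter_upwards [nhdsWithin_le_nhds hβ, nhdsWithin_le_nhds hx] with s hβs hxs
    have hest := mul_norm_sub_le_of_isPenalizedZero hA hB hβs hx.self_of_nhds hxs
    rw [norm_sub_rev, abs_sub_comm, abs_sub_comm (ε t)] at hest
    simp only [slope, vsub_eq_sub, norm_smul, smul_eq_mul, abs_mul, Real.norm_eq_abs]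
    linarith [mul_le_mul_of_nonneg_left hest (abs_nonneg (s - t)⁻¹)]
  rw [div_mul_eq_mul_div, div_mul_eq_mul_div, ← add_div, le_div_iff₀' hε]
  exact hle

theorem central_path_ae_differentiable_general [CompleteSpace E] (hA : MonoSV A)
    (hB : ∀ x y, 0 ≤ ⟪B x - B y, x - y⟫) (hB_cont : Continuous B)
    (hε : ∀ t, 0 ≤ t → 0 < ε t) (hβ : ∀ t, 0 ≤ t → 0 ≤ β t)
    (hεAC : ACRep ε ε') (hβAC : ACRep β β')
    (hx : ∀ t, 0 ≤ t → IsPenalizedZero A B (ε t) (β t) (x t)) :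
    ∀ᵐ t ∂volume.restrict (Ici (0 : ℝ)), DifferentiableAt ℝ x t ∧
      ‖deriv x t‖ ≤ |β' t| / ε t * ‖B (x t)‖ + |ε' t| / ε t * ‖x t‖ := by
  have hpos : ∀ᵐ t ∂volume.restrict (Ici (0 : ℝ)), 0 < t := by
    rw [← restrict_Ioi_eq_restrict_Ici]
    exact ae_restrict_mem measurableSet_Ioi
  filter_upwards [hpos, hεAC.ae_hasDerivAt, hβAC.ae_hasDerivAt,
    ae_differentiableAt_of_isPenalizedZero hA hB hB_cont hε hβ hεAC hβAC hx]
    with t ht hε' hβ' hdiff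
  have near : ∀ᶠ s in 𝓝 t, 0 ≤ s := Ici_mem_nhds ht
  exact ⟨hdiff, norm_le_of_hasDerivAt_of_isPenalizedZero hA hB (hε t ht.le) (near.mono hβ)
    hε' hβ' hdiff.hasDerivAt (near.mono hx)⟩

end PenalizedZeros

/-- the central path `t ↦ x̄(ε(t), β(t))` is differentiable almost
everywhere on `[0,∞)`, with `‖(d/dt)x̄(t)‖ ≤ (β'(t)/ε(t))‖B(x̄(t))‖ + (|ε'(t)|/ε(t))‖x̄(t)‖`
for almost every `t ≥ 0`. -/
theorem central_path_ae_differentiable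
    (A : H → Set H) (D B : H → H) (η μ : ℝ) (hη : 0 < η) (hμ : 0 < μ)
    (hAmax : MaxMonoSV A)
    (hDmono : ∀ x y : H, (0:ℝ) ≤ ⟪D x - D y, x - y⟫)
    (hDlip : ∀ x y : H, ‖D x - D y‖ ≤ (1/η) * ‖x - y‖)
    (hBcoco : ∀ x y : H, μ * ‖B x - B y‖^2 ≤ ⟪B x - B y, x - y⟫)
    (xbar : ℝ → ℝ → H)
    (hxbar : ∀ ε β : ℝ, 0 < ε → 0 < β →
      (∃ a ∈ A (xbar ε β), a + D (xbar ε β) + ε • xbar ε β + β • B (xbar ε β) = 0) ∧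
      (∀ z : H, (∃ a ∈ A z, a + D z + ε • z + β • B z = 0) → z = xbar ε β))
    (ε β ε' β' : ℝ → ℝ)
    (hεpos : ∀ t : ℝ, 0 ≤ t → 0 < ε t) (hβpos : ∀ t : ℝ, 0 ≤ t → 0 < β t)
    (hεAC : ACRep ε ε') (hβAC : ACRep β β')
    (hεanti : ∀ s t : ℝ, 0 ≤ s → s ≤ t → ε t ≤ ε s)
    (hβmono : ∀ s t : ℝ, 0 ≤ s → s ≤ t → β s ≤ β t)
    (hε0 : Tendsto ε atTop (nhds 0)) (hβinf : Tendsto β atTop atTop)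
    (hεβ : Tendsto (fun t => ε t * β t) atTop atTop) :
    ∃ v : ℝ → H, ∀ᵐ t ∂(MeasureTheory.volume.restrict (Set.Ici (0:ℝ))),
      HasDerivAt (fun s => xbar (ε s) (β s)) (v t) t ∧
      ‖v t‖ ≤ (β' t / ε t) * ‖B (xbar (ε t) (β t))‖ + (|ε' t| / ε t) * ‖xbar (ε t) (β t)‖ := by
  have hB_mono (x y : H) : 0 ≤ ⟪B x - B y, x - y⟫ := le_trans (by positivity) (hBcoco x y)
  have hzero (t : ℝ) (ht : 0 ≤ t) :
      IsPenalizedZero (fun x => (· + D x) '' A x) B (ε t) (β t) (xbar (ε t) (β t)) :=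
    isPenalizedZero_image_add_iff.2 (hxbar _ _ (hεpos t ht) (hβpos t ht)).1
  have hbound := central_path_ae_differentiable_general (hAmax.1.image_add hDmono) hB_mono
    (lipschitzWith_of_cocoercive hμ hBcoco).continuous hεpos (fun t ht => (hβpos t ht).le)
    hεAC hβAC hzero
  refine ⟨deriv fun s => xbar (ε s) (β s), ?_⟩
  filter_upwards [hbound, hβAC.ae_nonneg_of_monotoneOn fun s hs t _ => hβmono s t hs]
    with t ⟨hdiff, hle⟩ hβ'
  rw [abs_of_nonneg hβ'] at hle
  exact ⟨hdiff.hasDerivAt, hle⟩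
end

section
/- Let H be a real Hilbert space, A : H → Set H monotone, and let V : H → H be ε-strongly monotone for some ε > 0. Let λ > 0, let x̄ ∈ H satisfy −V(x̄) ∈ A(x̄), let x ∈ H, and let p ∈ H satisfy p + λ a = x − λ V(x) for some a ∈ A(p). Then 0 ≤ −‖x − p‖² + ‖x − x̄‖² − (1 + 2λε)‖p − x̄‖² + 2λ ⟪V(p) − V(x), p − x̄⟫. -/
open scoped RealInnerProductSpace

/-!
Put `w = a + V p ∈ (A + V) p`. The forward-backward step then reads
`p + λ w = x + λ (V p - V x)`: it is a resolvent step of `A + V` with error `λ (V p - V x)`.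
Since `A + V` is `ε`-strongly monotone and `0 ∈ (A + V) x̄`, we have `ε ‖p - x̄‖² ≤ ⟪w, p - x̄⟫`;
multiplying by `2 λ` and expanding `‖x - x̄‖² = ‖(x - p) + (p - x̄)‖²` gives the claim.
-/

open scoped Pointwise

section StronglyMonotone

variable {H : Type*} [NormedAddCommGroup H] [InnerProductSpace ℝ H]

/-- Strong monotonicity of a set-valued operator `M` with modulus `ε`, used to treat `A`, `V` and
`A + V` alike. The modulus is an arbitrary real number, so that `ε = 0` is plain monotonicity; a
single-valued map `V` is encoded as `fun x ↦ {V x}`. -/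
def IsStronglyMonotone (M : H → Set H) (ε : ℝ) : Prop :=
  ∀ ⦃x y u v : H⦄, u ∈ M x → v ∈ M y → ε * ‖x - y‖ ^ 2 ≤ ⟪u - v, x - y⟫

theorem isStronglyMonotone_zero_iff {M : H → Set H} :
    IsStronglyMonotone M 0 ↔ ∀ ⦃x y u v : H⦄, u ∈ M x → v ∈ M y → 0 ≤ ⟪u - v, x - y⟫ := by
  simp only [IsStronglyMonotone, zero_mul]

theorem isStronglyMonotone_singleton_iff {V : H → H} {ε : ℝ} :
    IsStronglyMonotone (fun x ↦ {V x}) ε ↔ ∀ x y, ε * ‖x - y‖ ^ 2 ≤ ⟪V x - V y, x - y⟫ := by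
  simp only [IsStronglyMonotone, Set.mem_singleton_iff]
  exact ⟨fun h _ _ ↦ h rfl rfl, by rintro h x y _ _ rfl rfl; exact h x y⟩

namespace IsStronglyMonotone

theorem add {M N : H → Set H} {μ ν : ℝ} (hM : IsStronglyMonotone M μ)
    (hN : IsStronglyMonotone N ν) : IsStronglyMonotone (M + N) (μ + ν) := by
  rintro x y _ _ ⟨u, hu, u', hu', rfl⟩ ⟨v, hv, v', hv', rfl⟩
  calc (μ + ν) * ‖x - y‖ ^ 2 = μ * ‖x - y‖ ^ 2 + ν * ‖x - y‖ ^ 2 := add_mul ..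
    _ ≤ ⟪u - v, x - y⟫ + ⟪u' - v', x - y⟫ := add_le_add (hM hu hv) (hN hu' hv')
    _ = ⟪u + u' - (v + v'), x - y⟫ := by rw [← inner_add_left, add_sub_add_comm]

-- For `e = 0`, `p` is the resolvent `(1 + lam M)⁻¹ x`; the vector `e` is the error of the step.
theorem norm_sub_sq_add_le_of_resolvent_step {M : H → Set H} {ε lam : ℝ} {x p w z e : H}
    (hM : IsStronglyMonotone M ε) (hlam : 0 ≤ lam) (hz : 0 ∈ M z) (hw : w ∈ M p)
    (hp : p + lam • w = x + e) :
    ‖x - p‖ ^ 2 + (1 + 2 * lam * ε) * ‖p - z‖ ^ 2 ≤ ‖x - z‖ ^ 2 + 2 * ⟪e, p - z⟫ := by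
  have inner_step : ⟪x - p, p - z⟫ = lam * ⟪w, p - z⟫ - ⟪e, p - z⟫ := by
    have step : x - p = lam • w - e := by linear_combination (norm := module) -hp
    rw [step, inner_sub_left, real_inner_smul_left]
  have norm_expand : ‖x - z‖ ^ 2 = ‖x - p‖ ^ 2 + 2 * ⟪x - p, p - z⟫ + ‖p - z‖ ^ 2 := by
    rw [← norm_add_sq_real, sub_add_sub_cancel]
  have monotone_at_zero : ε * ‖p - z‖ ^ 2 ≤ ⟪w, p - z⟫ := by
    simpa only [sub_zero] using hM hw hz
  have scaled_monotone := mul_le_mul_of_nonneg_left monotone_at_zero hlam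
  linarith

end IsStronglyMonotone

end StronglyMonotone

/-- basic inequality for the forward-backward-forward dynamics
(Lemma 3.7 of the paper). -/
theorem FBF_basic_inequality
    {H : Type*} [NormedAddCommGroup H] [InnerProductSpace ℝ H]
    (A : H → Set H) (V : H → H) (ε : ℝ) (hε : 0 < ε)
    (hAmono : ∀ ⦃x y u v : H⦄, u ∈ A x → v ∈ A y → (0:ℝ) ≤ ⟪u - v, x - y⟫)
    (hVsm : ∀ x y : H, ε * ‖x - y‖^2 ≤ ⟪V x - V y, x - y⟫)
    (lam : ℝ) (hlam : 0 < lam)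
    (xbar : H) (hxbar : -V xbar ∈ A xbar)
    (x p a : H) (ha : a ∈ A p) (hp : p + lam • a = x - lam • V x) :
    0 ≤ -‖x - p‖^2 + ‖x - xbar‖^2 - (1 + 2 * lam * ε) * ‖p - xbar‖^2
        + 2 * lam * ⟪V p - V x, p - xbar⟫ := by
  have sum_mono : IsStronglyMonotone (A + fun x ↦ {V x}) ε := by
    simpa only [zero_add] using
      (isStronglyMonotone_zero_iff.2 hAmono).add (isStronglyMonotone_singleton_iff.2 hVsm)
  have zero_mem : 0 ∈ A xbar + {V xbar} :=
    ⟨-V xbar, hxbar, V xbar, rfl, neg_add_cancel _⟩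
  have sum_mem : a + V p ∈ A p + {V p} := Set.add_mem_add ha (Set.mem_singleton _)
  have resolvent_step : p + lam • (a + V p) = x + lam • (V p - V x) := by
    linear_combination (norm := module) hp
  have perturbed_bound :=
    sum_mono.norm_sub_sq_add_le_of_resolvent_step hlam.le zero_mem sum_mem resolvent_step
  rw [real_inner_smul_left] at perturbed_bound
  linarith
end

section
/- Let H be a real Hilbert space, A : H → Set H monotone, and let V : H → H be ε-strongly monotone (ε > 0) and L-Lipschitz continuous. Let λ > 0, let x̄ ∈ H satisfy −V(x̄) ∈ A(x̄), let x ∈ H, let p ∈ H satisfy p + λ a = x − λ V(x) for some a ∈ A(p), and set v := p − x + λ(V(x) − V(p)). Then ⟪x − x̄, v⟫ ≤ (λL − 1)‖x − p‖² − λε‖p − x̄‖². -/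
open scoped RealInnerProductSpace

/-!
Split `x - xbar = (x - p) + (p - xbar)` and write `v = p - x + lam • (V x - V p)`. Against `x - p`,
the field `v` is controlled by Cauchy–Schwarz and the Lipschitz bound. The resolvent equation turns
`v` into `-lam • (a + V p)`, a multiple of an element of `(A + V) p`; since `0 ∈ (A + V) xbar`,
strong monotonicity of `A + V` controls `v` against `p - xbar`.
-/

theorem sub_add_smul_sub_eq_neg_smul_add {R M : Type*} [Ring R] [AddCommGroup M] [Module R M]
    {c : R} {x p a w : M} (hp : p + c • a = x - c • w) (w' : M) :
    p - x + c • (w - w') = -(c • (a + w')) := by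
  rw [eq_sub_of_add_eq hp, smul_sub, smul_add]
  abel

section InnerProductSpace

variable {H : Type*} [NormedAddCommGroup H] [InnerProductSpace ℝ H]

theorem strongly_monotone_add {A : H → Set H} {V : H → H} {ε : ℝ}
    (hA : ∀ ⦃x y u v : H⦄, u ∈ A x → v ∈ A y → (0 : ℝ) ≤ ⟪u - v, x - y⟫)
    (hV : ∀ x y : H, ε * ‖x - y‖ ^ 2 ≤ ⟪V x - V y, x - y⟫)
    {x y u v : H} (hu : u ∈ A x) (hv : v ∈ A y) :
    ε * ‖x - y‖ ^ 2 ≤ ⟪(u + V x) - (v + V y), x - y⟫ := by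
  rw [add_sub_add_comm, inner_add_left]
  exact le_add_of_nonneg_of_le (hA hu hv) (hV x y)

theorem real_inner_le_mul_norm_sq {z w : H} {L : ℝ} (hw : ‖w‖ ≤ L * ‖z‖) :
    ⟪z, w⟫ ≤ L * ‖z‖ ^ 2 :=
  calc
    ⟪z, w⟫ ≤ ‖z‖ * ‖w‖ := real_inner_le_norm z w
    _ ≤ ‖z‖ * (L * ‖z‖) := by gcongr
    _ = L * ‖z‖ ^ 2 := by ring

theorem inner_sub_sub_add_smul_le {x p w : H} {L lam : ℝ} (hlam : 0 ≤ lam)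
    (hw : ‖w‖ ≤ L * ‖x - p‖) :
    ⟪x - p, p - x + lam • w⟫ ≤ (lam * L - 1) * ‖x - p‖ ^ 2 :=
  calc
    ⟪x - p, p - x + lam • w⟫ = lam * ⟪x - p, w⟫ - ‖x - p‖ ^ 2 := by
      rw [inner_add_right, real_inner_smul_right, ← neg_sub x p, inner_neg_right,
        real_inner_self_eq_norm_sq, neg_add_eq_sub]
    _ ≤ lam * (L * ‖x - p‖ ^ 2) - ‖x - p‖ ^ 2 := by
      gcongr
      exact real_inner_le_mul_norm_sq hw
    _ = (lam * L - 1) * ‖x - p‖ ^ 2 := by ring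

theorem inner_neg_smul_le {z u : H} {ε lam : ℝ} (hlam : 0 ≤ lam)
    (hu : ε * ‖z‖ ^ 2 ≤ ⟪u, z⟫) :
    ⟪z, -(lam • u)⟫ ≤ -(lam * ε * ‖z‖ ^ 2) := by
  rw [inner_neg_right, real_inner_smul_right, real_inner_comm, mul_assoc]
  gcongr

theorem FBF_descent_inequality_general {V : H → H} {ε L lam : ℝ} (hlam : 0 ≤ lam)
    {xbar x p a : H} (hp : p + lam • a = x - lam • V x)
    (hmono : ε * ‖p - xbar‖ ^ 2 ≤ ⟪a + V p, p - xbar⟫)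
    (hlip : ‖V x - V p‖ ≤ L * ‖x - p‖) :
    ⟪x - xbar, p - x + lam • (V x - V p)⟫ ≤
      (lam * L - 1) * ‖x - p‖ ^ 2 - lam * ε * ‖p - xbar‖ ^ 2 := by
  have lipschitz_bound := inner_sub_sub_add_smul_le hlam hlip
  have monotone_bound : ⟪p - xbar, p - x + lam • (V x - V p)⟫ ≤ -(lam * ε * ‖p - xbar‖ ^ 2) := by
    rw [sub_add_smul_sub_eq_neg_smul_add hp]
    exact inner_neg_smul_le hlam hmono
  rw [← sub_add_sub_cancel x p xbar, inner_add_left, sub_eq_add_neg (_ * _)]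
  exact add_le_add lipschitz_bound monotone_bound

end InnerProductSpace

/-- descent inequality for the forward-backward-forward vector field
(Lemma 3.8 of the paper). -/
theorem FBF_descent_inequality
    {H : Type*} [NormedAddCommGroup H] [InnerProductSpace ℝ H]
    (A : H → Set H) (V : H → H) (ε L : ℝ) (hε : 0 < ε)
    (hAmono : ∀ ⦃x y u v : H⦄, u ∈ A x → v ∈ A y → (0:ℝ) ≤ ⟪u - v, x - y⟫)
    (hVsm : ∀ x y : H, ε * ‖x - y‖^2 ≤ ⟪V x - V y, x - y⟫)
    (hVlip : ∀ x y : H, ‖V x - V y‖ ≤ L * ‖x - y‖)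
    (lam : ℝ) (hlam : 0 < lam)
    (xbar : H) (hxbar : -V xbar ∈ A xbar)
    (x p a : H) (ha : a ∈ A p) (hp : p + lam • a = x - lam • V x) :
    ⟪x - xbar, p - x + lam • (V x - V p)⟫ ≤
      (lam * L - 1) * ‖x - p‖^2 - lam * ε * ‖p - xbar‖^2 :=
  FBF_descent_inequality_general hlam.le hp
    (by simpa using strongly_monotone_add hAmono hVsm ha hxbar) (hVlip x p)
end
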